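/- arXiv:2110.14640 — 3 statements merged into one kernel-verified Lean document; each statement's English description precedes it below -/
import Mathlib

section
/- Let N ≥ 4 be an integer, Ω ⊂ ℝ^N a nonempty bounded open set, x₀ ∈ Ω, and a, b : ℝ^N → ℝ continuous functions positive on the closure of Ω with a(x₀) = b(x₀) = γ₀ and γ₀ = min_{x∈Ω̄} a(x) = min_{x∈Ω̄} b(x). Suppose a admits the expansion of order k at x₀ with coefficient A_k > 0 and b admits the expansion of order l at x₀ with coefficient B_l > 0, where k > 2 and l > 2. Then for every λ > 0 there exist smooth functions u, v compactly supported in Ω with ‖u‖_{L^q(Ω)} = ‖v‖_{L^q(Ω)} = 1 such that F_λ(u,v) < γ₀ S. -/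
open MeasureTheory Real Filter Topology

noncomputable section

lemma aux_int0 (N : ℕ) (hN : 4 ≤ N) :
    Integrable (fun y : EuclideanSpace ℝ (Fin N) => (1 + ‖y‖ ^ 2) ^ (-(N : ℝ))) := by
  have hN' : (4 : ℝ) ≤ N := by exact_mod_cast hN
  have h := integrable_rpow_neg_one_add_norm_sq (E := EuclideanSpace ℝ (Fin N)) (μ := volume)
    (r := 2 * (N : ℝ)) (by rw [finrank_euclideanSpace_fin]; linarith)
  have e : -(2 * (N : ℝ)) / 2 = -(N : ℝ) := by ring
  rwa [e] at h

lemma aux_int1 (N : ℕ) (hN : 4 ≤ N) :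
    Integrable (fun y : EuclideanSpace ℝ (Fin N) => ‖y‖ ^ 2 * (1 + ‖y‖ ^ 2) ^ (-(N : ℝ))) := by
  have hN' : (4 : ℝ) ≤ N := by exact_mod_cast hN
  have h := integrable_rpow_neg_one_add_norm_sq (E := EuclideanSpace ℝ (Fin N)) (μ := volume)
    (r := 2 * (N : ℝ) - 2) (by rw [finrank_euclideanSpace_fin]; linarith)
  refine h.mono' (Measurable.aestronglyMeasurable (by fun_prop)) (Eventually.of_forall fun y => ?_)
  have hp : 0 < 1 + ‖y‖ ^ 2 := by positivity
  rw [Real.norm_of_nonneg (by positivity)]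
  have e : -(2 * (N : ℝ) - 2) / 2 = 1 + -(N : ℝ) := by ring
  rw [e, Real.rpow_add hp, Real.rpow_one]
  gcongr
  linarith

lemma aux_scale (N : ℕ) (x₀ : EuclideanSpace ℝ (Fin N)) (ε : ℝ) (hε : 0 < ε)
    (f g : EuclideanSpace ℝ (Fin N) → ℝ) (c : ℝ) (hg : Integrable g)
    (h : ∀ x, f x = c * g (ε⁻¹ • (x - x₀))) :
    Integrable f ∧ ∫ x, f x = c * ε ^ N * ∫ x, g x := by
  have hf : f = fun x => c * g (ε⁻¹ • (x - x₀)) := funext h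
  have h1 : Integrable (fun x => g (ε⁻¹ • x)) :=
    (integrable_comp_smul_iff volume g (inv_ne_zero hε.ne')).2 hg
  have h2 : Integrable (fun x => g (ε⁻¹ • (x - x₀))) := h1.comp_sub_right x₀
  refine ⟨by rw [hf]; exact h2.const_mul c, ?_⟩
  rw [hf, integral_const_mul, integral_sub_right_eq_self (fun x => g (ε⁻¹ • x)) x₀,
    Measure.integral_comp_smul, finrank_euclideanSpace_fin, abs_of_pos (by positivity)]
  simp only [inv_pow, inv_inv, smul_eq_mul]
  ring

lemma aux_pt (N : ℕ) (x₀ x : EuclideanSpace ℝ (Fin N)) (ε : ℝ) (hε : 0 < ε) :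
    (ε ^ 2 + ‖x - x₀‖ ^ 2) ^ (-(N : ℝ)) =
      ((ε ^ N) ^ 2)⁻¹ * (1 + ‖ε⁻¹ • (x - x₀)‖ ^ 2) ^ (-(N : ℝ)) := by
  have : ε ^ 2 + ‖x - x₀‖ ^ 2 = ε ^ 2 * (1 + ‖ε⁻¹ • (x - x₀)‖ ^ 2) := by
    rw [norm_smul, norm_inv, Real.norm_of_nonneg hε.le]; field_simp
  rw [this, Real.mul_rpow (by positivity) (by positivity), Real.rpow_neg (by positivity),
    Real.rpow_natCast, ← pow_mul, ← pow_mul, mul_comm 2 N]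

lemma aux_s0 (N : ℕ) (hN : 4 ≤ N) (x₀ : EuclideanSpace ℝ (Fin N)) (ε : ℝ) (hε : 0 < ε) :
    Integrable (fun x => (ε ^ 2 + ‖x - x₀‖ ^ 2) ^ (-(N : ℝ))) ∧
    ∫ x, (ε ^ 2 + ‖x - x₀‖ ^ 2) ^ (-(N : ℝ)) = (ε ^ N)⁻¹ *
      ∫ y : EuclideanSpace ℝ (Fin N), (1 + ‖y‖ ^ 2) ^ (-(N : ℝ)) := by
  have := aux_scale N x₀ ε hε (fun x => (ε ^ 2 + ‖x - x₀‖ ^ 2) ^ (-(N : ℝ)))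
    (fun y => (1 + ‖y‖ ^ 2) ^ (-(N : ℝ))) (((ε ^ N) ^ 2)⁻¹) (aux_int0 N hN)
    (fun x => aux_pt N x₀ x ε hε)
  refine ⟨this.1, this.2.trans ?_⟩
  congr 1
  field_simp

lemma aux_s1 (N : ℕ) (hN : 4 ≤ N) (x₀ : EuclideanSpace ℝ (Fin N)) (ε : ℝ) (hε : 0 < ε) :
    Integrable (fun x => ‖x - x₀‖ ^ 2 * (ε ^ 2 + ‖x - x₀‖ ^ 2) ^ (-(N : ℝ))) ∧
    ∫ x, ‖x - x₀‖ ^ 2 * (ε ^ 2 + ‖x - x₀‖ ^ 2) ^ (-(N : ℝ)) = (ε ^ 2 / ε ^ N) *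
      ∫ y : EuclideanSpace ℝ (Fin N), ‖y‖ ^ 2 * (1 + ‖y‖ ^ 2) ^ (-(N : ℝ)) := by
  have := aux_scale N x₀ ε hε (fun x => ‖x - x₀‖ ^ 2 * (ε ^ 2 + ‖x - x₀‖ ^ 2) ^ (-(N : ℝ)))
    (fun y => ‖y‖ ^ 2 * (1 + ‖y‖ ^ 2) ^ (-(N : ℝ))) (ε ^ 2 * ((ε ^ N) ^ 2)⁻¹) (aux_int1 N hN)
    (fun x => by
      rw [aux_pt N x₀ x ε hε]
      have : ‖x - x₀‖ ^ 2 = ε ^ 2 * ‖ε⁻¹ • (x - x₀)‖ ^ 2 := by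
        rw [norm_smul, norm_inv, Real.norm_of_nonneg hε.le]; field_simp
      rw [this]; ring)
  refine ⟨this.1, this.2.trans ?_⟩
  congr 1
  field_simp

lemma aux_cont (N : ℕ) (x₀ : EuclideanSpace ℝ (Fin N)) (ε p : ℝ) (hε : 0 < ε) :
    Continuous (fun x => (ε ^ 2 + ‖x - x₀‖ ^ 2) ^ p) := by
  refine Continuous.rpow_const (by fun_prop) (fun x => Or.inl ?_)
  positivity

lemma aux_div (N : ℕ) (hN : 4 ≤ N) (x₀ : EuclideanSpace ℝ (Fin N)) (r : ℝ) (hr : 0 < r) (M : ℝ) :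
    ∃ ε : ℝ, 0 < ε ∧ ε ≤ 1 ∧
      M < ∫ x in Metric.ball x₀ r, (ε ^ 2 + ‖x - x₀‖ ^ 2) ^ (-((N : ℝ) - 2)) := by
  by_contra! hcon
  have hN' : (4 : ℝ) ≤ N := by exact_mod_cast hN
  have : Nonempty (Fin N) := ⟨⟨0, by omega⟩⟩
  have : Nontrivial (EuclideanSpace ℝ (Fin N)) := by
    infer_instance
  set e : ℕ → ℝ := fun n => 1 / ((n : ℝ) + 1) with he
  have hepos : ∀ n, 0 < e n := fun n => by simp only [he]; positivity
  have hele : ∀ n, e n ≤ 1 := fun n => by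
    simp only [he]; rw [div_le_one (by positivity)]; linarith [Nat.cast_nonneg (α := ℝ) n]
  have hfat : ∫⁻ x in Metric.ball (0 : EuclideanSpace ℝ (Fin N)) r,
      ENNReal.ofReal ((‖x‖ ^ 2) ^ (-((N : ℝ) - 2))) ≤ ENNReal.ofReal M := by
    have hF := lintegral_liminf_le (μ := volume.restrict (Metric.ball (0 : EuclideanSpace ℝ (Fin N)) r))
      (u := atTop) (f := fun (n : ℕ) (x : EuclideanSpace ℝ (Fin N)) =>
        ENNReal.ofReal ((e n ^ 2 + ‖x‖ ^ 2) ^ (-((N : ℝ) - 2)))) (fun n => by fun_prop)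
    refine le_trans (lintegral_mono_ae ?_) (hF.trans ?_)
    · have hne : ∀ᵐ x : EuclideanSpace ℝ (Fin N) ∂(volume.restrict (Metric.ball 0 r)), x ≠ 0 :=
        ae_restrict_of_ae (Measure.ae_ne volume 0)
      filter_upwards [hne] with x hx
      refine le_of_eq (Tendsto.liminf_eq ?_).symm
      refine (ENNReal.continuous_ofReal.tendsto _).comp ?_
      have h0 : Tendsto (fun n => e n ^ 2 + ‖x‖ ^ 2) atTop (𝓝 (‖x‖ ^ 2)) := by
        have := ((tendsto_one_div_add_atTop_nhds_zero_nat (𝕜 := ℝ)).pow 2).add_const (‖x‖ ^ 2)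
        simpa [he] using this
      exact h0.rpow_const (Or.inl (by positivity))
    · refine (liminf_le_liminf (v := fun _ => ENNReal.ofReal M) (Eventually.of_forall fun n => ?_)).trans (by simp)
      have hc : Continuous (fun x : EuclideanSpace ℝ (Fin N) => (e n ^ 2 + ‖x‖ ^ 2) ^ (-((N : ℝ) - 2))) := by
        simpa using aux_cont N 0 (e n) (-((N : ℝ) - 2)) (hepos n)
      have hi : IntegrableOn (fun x : EuclideanSpace ℝ (Fin N) =>
          (e n ^ 2 + ‖x‖ ^ 2) ^ (-((N : ℝ) - 2))) (Metric.ball 0 r) :=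
        (hc.continuousOn.integrableOn_compact (isCompact_closedBall 0 r)).mono_set
          Metric.ball_subset_closedBall
      rw [← ofReal_integral_eq_lintegral_ofReal hi (Eventually.of_forall fun x => by positivity)]
      refine ENNReal.ofReal_le_ofReal (le_trans (le_of_eq ?_) (hcon (e n) (hepos n) (hele n)))
      rw [← integral_indicator measurableSet_ball, ← integral_indicator measurableSet_ball,
        ← integral_sub_right_eq_self _ x₀]
      congr 1
      ext x
      simp only [Set.indicator, Metric.mem_ball, dist_eq_norm, sub_zero]
  have hint : IntegrableOn (fun x : EuclideanSpace ℝ (Fin N) => (‖x‖ ^ 2) ^ (-((N : ℝ) - 2)))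
      (Metric.ball 0 r) := by
    refine ⟨Measurable.aestronglyMeasurable (by fun_prop), ?_⟩
    rw [hasFiniteIntegral_iff_ofReal (Eventually.of_forall fun x => by positivity)]
    exact hfat.trans_lt ENNReal.ofReal_lt_top
  rw [integrableOn_fun_norm_addHaar volume (f := fun t => (t ^ 2) ^ (-((N : ℝ) - 2))),
    finrank_euclideanSpace_fin] at hint
  have h3 : IntegrableOn (fun t : ℝ => t ^ (3 - (N : ℝ))) (Set.Ioo 0 r) := by
    refine hint.congr_fun (fun t ht => ?_) measurableSet_Ioo
    have ht0 : 0 < t := ht.1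
    simp only [smul_eq_mul]
    rw [← Real.rpow_natCast, ← Real.rpow_natCast, ← Real.rpow_mul ht0.le, ← Real.rpow_add ht0,
      Nat.cast_sub (by omega)]
    congr 1
    push_cast; ring
  rw [intervalIntegral.integrableOn_Ioo_rpow_iff hr] at h3
  linarith

def bub (N : ℕ) (x₀ : EuclideanSpace ℝ (Fin N)) (ε : ℝ) (x : EuclideanSpace ℝ (Fin N)) : ℝ :=
  (ε ^ 2 + ‖x - x₀‖ ^ 2) ^ (-(((N : ℝ) - 2) / 2))

lemma bub_contDiff (N : ℕ) (x₀ : EuclideanSpace ℝ (Fin N)) (ε : ℝ) (hε : 0 < ε) :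
    ContDiff ℝ (⊤ : ℕ∞) (bub N x₀ ε) := by
  unfold bub
  refine ContDiff.rpow_const_of_ne ?_ (fun x => by positivity)
  exact contDiff_const.add ((contDiff_id.sub contDiff_const).norm_sq ℝ)

lemma bub_pos (N : ℕ) (x₀ x : EuclideanSpace ℝ (Fin N)) (ε : ℝ) (hε : 0 < ε) :
    0 < bub N x₀ ε x := by
  unfold bub; positivity

lemma bub_sq (N : ℕ) (x₀ x : EuclideanSpace ℝ (Fin N)) (ε : ℝ) (hε : 0 < ε) :
    bub N x₀ ε x ^ 2 = (ε ^ 2 + ‖x - x₀‖ ^ 2) ^ (-((N : ℝ) - 2)) := by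
  unfold bub
  rw [← Real.rpow_natCast, ← Real.rpow_mul (by positivity)]
  congr 1; push_cast; ring

lemma bub_q (N : ℕ) (hN : 4 ≤ N) (x₀ x : EuclideanSpace ℝ (Fin N)) (ε : ℝ) (hε : 0 < ε) (q : ℝ)
    (hq : q = 2 * (N : ℝ) / ((N : ℝ) - 2)) :
    bub N x₀ ε x ^ q = (ε ^ 2 + ‖x - x₀‖ ^ 2) ^ (-(N : ℝ)) := by
  have hN' : (4 : ℝ) ≤ N := by exact_mod_cast hN
  unfold bub
  rw [← Real.rpow_mul (by positivity)]
  congr 1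
  have : (N : ℝ) - 2 ≠ 0 := by linarith
  rw [hq]; field_simp

lemma bub_fderiv (N : ℕ) (_hN : 4 ≤ N) (x₀ x : EuclideanSpace ℝ (Fin N)) (ε : ℝ) (hε : 0 < ε) :
    ‖fderiv ℝ (bub N x₀ ε) x‖ ^ 2 =
      ((N : ℝ) - 2) ^ 2 * (‖x - x₀‖ ^ 2 * (ε ^ 2 + ‖x - x₀‖ ^ 2) ^ (-(N : ℝ))) := by
  have hp : 0 < ε ^ 2 + ‖x - x₀‖ ^ 2 := by positivity
  have h1 : HasFDerivAt (fun x => ε ^ 2 + ‖x - x₀‖ ^ 2)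
      (2 • (innerSL ℝ (x - x₀)).comp (ContinuousLinearMap.id ℝ (EuclideanSpace ℝ (Fin N)))) x :=
    (((hasFDerivAt_id x).sub_const x₀).norm_sq).const_add (ε ^ 2)
  have h2 := h1.rpow_const (p := -(((N : ℝ) - 2) / 2)) (Or.inl hp.ne')
  have h3 : fderiv ℝ (bub N x₀ ε) x = _ := h2.fderiv
  rw [h3, ContinuousLinearMap.comp_id, ← Nat.cast_smul_eq_nsmul ℝ, norm_smul, norm_smul, innerSL_apply_norm,
    norm_mul, mul_pow, mul_pow, mul_pow, Real.norm_eq_abs, Real.norm_eq_abs, sq_abs, sq_abs,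
    ← Real.rpow_natCast (_ ^ (_ - 1)), ← Real.rpow_mul hp.le]
  have : (-(((N : ℝ) - 2) / 2) - 1) * ((2 : ℕ) : ℝ) = -(N : ℝ) := by push_cast; ring
  rw [this]
  simp
  ring

lemma rpow_neg_anti {A B p : ℝ} (hA : 0 < A) (hAB : A ≤ B) (hp : 0 ≤ p) : B ^ (-p) ≤ A ^ (-p) :=
  Real.rpow_le_rpow_of_nonpos hA hAB (by linarith)

lemma ann_bound (N : ℕ) (hN : 4 ≤ N) (x₀ : EuclideanSpace ℝ (Fin N)) (φ : ContDiffBump x₀) :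
    ∃ C : ℝ, 0 ≤ C ∧ ∀ ε : ℝ, 0 < ε → ∀ x ∈ Metric.closedBall x₀ φ.rOut \ Metric.ball x₀ φ.rIn,
      ‖fderiv ℝ (fun y => φ y * bub N x₀ ε y) x‖ ^ 2 ≤ C := by
  have hN' : (4 : ℝ) ≤ N := by exact_mod_cast hN
  have hφd : ContDiff ℝ 1 φ := φ.contDiff
  obtain ⟨M, hM⟩ := (φ.hasCompactSupport.fderiv (𝕜 := ℝ)).exists_bound_of_continuous
    (hφd.continuous_fderiv (by norm_num))
  have hr := φ.rIn_pos
  refine ⟨2 * ((((N : ℝ) - 2) ^ 2 * (φ.rOut ^ 2 * (φ.rIn ^ 2) ^ (-(N : ℝ)))) +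
    (φ.rIn ^ 2) ^ (-((N : ℝ) - 2)) * M ^ 2), by positivity, fun ε hε x hx => ?_⟩
  have hx1 : ‖x - x₀‖ ≤ φ.rOut := by
    have := hx.1; rwa [Metric.mem_closedBall, dist_eq_norm] at this
  have hx2 : φ.rIn ≤ ‖x - x₀‖ := by
    have := hx.2; rwa [Metric.mem_ball, dist_eq_norm, not_lt] at this
  have hG : φ.rIn ^ 2 ≤ ε ^ 2 + ‖x - x₀‖ ^ 2 := by nlinarith [sq_nonneg ε]
  have hfd := fderiv_mul (𝕜 := ℝ) (x := x) (c := φ) (d := bub N x₀ ε)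
    (hφd.differentiable (by norm_num) x) ((bub_contDiff N x₀ ε hε).differentiable (by simp) x)
  have hfd' : fderiv ℝ (fun y => φ y * bub N x₀ ε y) x = φ x • fderiv ℝ (bub N x₀ ε) x +
      bub N x₀ ε x • fderiv ℝ φ x := hfd
  rw [hfd']
  have h1 : ‖φ x • fderiv ℝ (bub N x₀ ε) x + bub N x₀ ε x • fderiv ℝ φ x‖ ≤
      ‖fderiv ℝ (bub N x₀ ε) x‖ + bub N x₀ ε x * M := by
    refine (norm_add_le _ _).trans ?_
    rw [norm_smul, norm_smul, Real.norm_of_nonneg φ.nonneg,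
      Real.norm_of_nonneg (bub_pos N x₀ x ε hε).le]
    have := φ.le_one (x := x)
    gcongr
    · exact mul_le_of_le_one_left (norm_nonneg _) this
    · exact (bub_pos N x₀ x ε hε).le
    · exact hM x
  have h2 : ‖fderiv ℝ (bub N x₀ ε) x‖ ^ 2 ≤
      ((N : ℝ) - 2) ^ 2 * (φ.rOut ^ 2 * (φ.rIn ^ 2) ^ (-(N : ℝ))) := by
    rw [bub_fderiv N hN x₀ x ε hε]
    have := rpow_neg_anti (p := (N : ℝ)) (by positivity) hG (by linarith)
    gcongr
  have h3 : bub N x₀ ε x ^ 2 ≤ (φ.rIn ^ 2) ^ (-((N : ℝ) - 2)) := by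
    rw [bub_sq N x₀ x ε hε]
    exact rpow_neg_anti (by positivity) hG (by linarith)
  have h4 : bub N x₀ ε x ^ 2 * M ^ 2 ≤ (φ.rIn ^ 2) ^ (-((N : ℝ) - 2)) * M ^ 2 := by gcongr
  calc _ ≤ (‖fderiv ℝ (bub N x₀ ε) x‖ + bub N x₀ ε x * M) ^ 2 := by gcongr
    _ ≤ 2 * (‖fderiv ℝ (bub N x₀ ε) x‖ ^ 2 + (bub N x₀ ε x) ^ 2 * M ^ 2) := by
      nlinarith [sq_nonneg (‖fderiv ℝ (bub N x₀ ε) x‖ - bub N x₀ ε x * M)]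
    _ ≤ _ := by linarith

lemma main_a (N : ℕ) (hN : 4 ≤ N) (Ω : Set (EuclideanSpace ℝ (Fin N)))
    (hΩo : IsOpen Ω) (x₀ : EuclideanSpace ℝ (Fin N)) (φ : ContDiffBump x₀)
    (hP : Metric.closedBall x₀ φ.rOut ⊆ Ω)
    (a : EuclideanSpace ℝ (Fin N) → ℝ) (ha : Continuous a) (γ η lam : ℝ) (hγ : 0 < γ)
    (hη : 0 ≤ η)
    (hal : ∀ x ∈ Metric.closedBall x₀ φ.rOut, γ ≤ a x)
    (hau : ∀ x ∈ Metric.closedBall x₀ φ.rOut, a x ≤ γ + η * ‖x - x₀‖ ^ 2)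
    (hηl : η * ((N : ℝ) - 2) ^ 2 ≤ lam / 2) :
    ∃ C : ℝ, ∀ ε : ℝ, 0 < ε →
      ∫ x in Ω, a x * ‖fderiv ℝ (fun y => φ y * bub N x₀ ε y) x‖ ^ 2 ≤
      γ * ((ε ^ 2 / ε ^ N) * (((N : ℝ) - 2) ^ 2 *
        ∫ y : EuclideanSpace ℝ (Fin N), ‖y‖ ^ 2 * (1 + ‖y‖ ^ 2) ^ (-(N : ℝ))))
      + (lam / 2) * (∫ x in Metric.ball x₀ φ.rIn, (ε ^ 2 + ‖x - x₀‖ ^ 2) ^ (-((N : ℝ) - 2))) + C := by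
  obtain ⟨C, hC0, hC⟩ := ann_bound N hN x₀ φ
  refine ⟨(γ + η * φ.rOut ^ 2) * C * (volume.real
    (Metric.closedBall x₀ φ.rOut \ Metric.ball x₀ φ.rIn)), fun ε hε => ?_⟩
  have hsub : Metric.ball x₀ φ.rIn ⊆ Metric.closedBall x₀ φ.rOut :=
    (Metric.ball_subset_ball φ.rIn_lt_rOut.le).trans Metric.ball_subset_closedBall
  set u : EuclideanSpace ℝ (Fin N) → ℝ := fun y => φ y * bub N x₀ ε y with hu
  have hud : ContDiff ℝ (⊤ : ℕ∞) u := φ.contDiff.mul (bub_contDiff N x₀ ε hε)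
  have hfc : Continuous (fun x => a x * ‖fderiv ℝ u x‖ ^ 2) :=
    ha.mul ((hud.continuous_fderiv (by simp)).norm.pow 2)
  have hiP : IntegrableOn (fun x => a x * ‖fderiv ℝ u x‖ ^ 2) (Metric.closedBall x₀ φ.rOut) :=
    hfc.continuousOn.integrableOn_compact (isCompact_closedBall _ _)
  have hts : tsupport u ⊆ Metric.closedBall x₀ φ.rOut := by
    rw [← φ.tsupport_eq]; exact tsupport_mul_subset_left
  have e1 : ∫ x in Ω, a x * ‖fderiv ℝ u x‖ ^ 2 =
      ∫ x in Metric.closedBall x₀ φ.rOut, a x * ‖fderiv ℝ u x‖ ^ 2 := by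
    refine setIntegral_eq_of_subset_of_forall_sdiff_eq_zero hΩo.measurableSet hP (fun x hx => ?_)
    have : fderiv ℝ u x = 0 := by
      by_contra h
      exact hx.2 (hts (support_fderiv_subset ℝ h))
    simp [this]
  have e2 : ∫ x in Metric.closedBall x₀ φ.rOut, a x * ‖fderiv ℝ u x‖ ^ 2 =
      (∫ x in Metric.ball x₀ φ.rIn, a x * ‖fderiv ℝ u x‖ ^ 2) +
      ∫ x in Metric.closedBall x₀ φ.rOut \ Metric.ball x₀ φ.rIn, a x * ‖fderiv ℝ u x‖ ^ 2 := by
    rw [setIntegral_sdiff measurableSet_ball hiP hsub]; ring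
  have e3 : ∫ x in Metric.closedBall x₀ φ.rOut \ Metric.ball x₀ φ.rIn, a x * ‖fderiv ℝ u x‖ ^ 2 ≤
      (γ + η * φ.rOut ^ 2) * C * (volume.real
        (Metric.closedBall x₀ φ.rOut \ Metric.ball x₀ φ.rIn)) := by
    refine (Real.le_norm_self _).trans (norm_setIntegral_le_of_norm_le_const ?_ (fun x hx => ?_))
    · exact (measure_mono Set.diff_subset).trans_lt (isCompact_closedBall x₀ φ.rOut).measure_lt_top
    · have h1 := hau x hx.1
      have h2 := hal x hx.1
      have h3 : ‖x - x₀‖ ≤ φ.rOut := by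
        have := hx.1; rwa [Metric.mem_closedBall, dist_eq_norm] at this
      have h4 : η * ‖x - x₀‖ ^ 2 ≤ η * φ.rOut ^ 2 := by gcongr
      have h5 := hC ε hε x hx
      have h6 : 0 ≤ a x := by linarith
      rw [Real.norm_of_nonneg (by positivity)]
      exact mul_le_mul (by linarith) h5 (by positivity) (by positivity)
  have s1 := aux_s1 N hN x₀ ε hε
  have hI : IntegrableOn (fun x => (ε ^ 2 + ‖x - x₀‖ ^ 2) ^ (-((N : ℝ) - 2)))
      (Metric.ball x₀ φ.rIn) :=
    ((aux_cont N x₀ ε _ hε).continuousOn.integrableOn_compact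
      (isCompact_closedBall x₀ φ.rOut)).mono_set hsub
  have e4 : ∫ x in Metric.ball x₀ φ.rIn, a x * ‖fderiv ℝ u x‖ ^ 2 ≤
      ∫ x in Metric.ball x₀ φ.rIn, ((γ * ((N : ℝ) - 2) ^ 2) *
        (‖x - x₀‖ ^ 2 * (ε ^ 2 + ‖x - x₀‖ ^ 2) ^ (-(N : ℝ)))
        + (lam / 2) * (ε ^ 2 + ‖x - x₀‖ ^ 2) ^ (-((N : ℝ) - 2))) := by
    refine setIntegral_mono_on (hiP.mono_set hsub)
      ((s1.1.integrableOn.const_mul _).add (hI.const_mul _)) measurableSet_ball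
      (fun x hx => ?_)
    have hloc : u =ᶠ[𝓝 x] bub N x₀ ε := by
      filter_upwards [φ.eventuallyEq_one_of_mem_ball hx] with y hy
      simp [hu, hy]
    rw [hloc.fderiv_eq, bub_fderiv N hN x₀ x ε hε]
    have hp : 0 < ε ^ 2 + ‖x - x₀‖ ^ 2 := by positivity
    have h1 := hau x (hsub hx)
    set G := ε ^ 2 + ‖x - x₀‖ ^ 2 with hG
    have hGN : G ^ (-((N : ℝ) - 2)) = G ^ 2 * G ^ (-(N : ℝ)) := by
      rw [← Real.rpow_natCast, ← Real.rpow_add hp]; congr 1; push_cast; ring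
    have hXG : ‖x - x₀‖ ^ 2 * ‖x - x₀‖ ^ 2 ≤ G ^ 2 := by
      rw [sq G]
      have : ‖x - x₀‖ ^ 2 ≤ G := by rw [hG]; nlinarith [sq_nonneg ε]
      gcongr
    rw [hGN]
    have hW : 0 < G ^ (-(N : ℝ)) := by positivity
    have c1 : a x * (((N : ℝ) - 2) ^ 2 * (‖x - x₀‖ ^ 2 * G ^ (-(N : ℝ)))) ≤
      (γ + η * ‖x - x₀‖ ^ 2) * (((N : ℝ) - 2) ^ 2 * (‖x - x₀‖ ^ 2 * G ^ (-(N : ℝ)))) := by gcongr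
    have c2 : (η * ((N : ℝ) - 2) ^ 2) * ((‖x - x₀‖ ^ 2 * ‖x - x₀‖ ^ 2) * G ^ (-(N : ℝ))) ≤
       (lam / 2) * (G ^ 2 * G ^ (-(N : ℝ))) := by
      have : 0 ≤ η * ((N : ℝ) - 2) ^ 2 := by positivity
      gcongr
      linarith
    linarith
  rw [integral_add (s1.1.integrableOn.const_mul _) (hI.const_mul _), integral_const_mul,
    integral_const_mul] at e4
  have e5 : ∫ x in Metric.ball x₀ φ.rIn, ‖x - x₀‖ ^ 2 * (ε ^ 2 + ‖x - x₀‖ ^ 2) ^ (-(N : ℝ)) ≤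
      ∫ x, ‖x - x₀‖ ^ 2 * (ε ^ 2 + ‖x - x₀‖ ^ 2) ^ (-(N : ℝ)) :=
    setIntegral_le_integral s1.1 (Eventually.of_forall fun x => by positivity)
  rw [s1.2] at e5
  have e6 := mul_le_mul_of_nonneg_left e5 (show 0 ≤ γ * ((N : ℝ) - 2) ^ 2 by positivity)
  rw [e1, e2]
  linarith

lemma kpos (N : ℕ) (hN : 4 ≤ N) :
    0 < ∫ y : EuclideanSpace ℝ (Fin N), (1 + ‖y‖ ^ 2) ^ (-(N : ℝ)) := by
  rw [integral_pos_iff_support_of_nonneg (fun y => by positivity) (aux_int0 N hN)]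
  have : Function.support (fun y : EuclideanSpace ℝ (Fin N) => (1 + ‖y‖ ^ 2) ^ (-(N : ℝ)))
      = Set.univ := by
    ext y
    simp only [Function.mem_support, Set.mem_univ, iff_true]
    positivity
  rw [this]
  exact isOpen_univ.measure_pos volume Set.univ_nonempty

lemma den (N : ℕ) (hN : 4 ≤ N) (Ω : Set (EuclideanSpace ℝ (Fin N)))
    (x₀ : EuclideanSpace ℝ (Fin N)) (φ : ContDiffBump x₀)
    (hP : Metric.closedBall x₀ φ.rOut ⊆ Ω) (q : ℝ) (hq : q = 2 * (N : ℝ) / ((N : ℝ) - 2)) :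
    ∃ C : ℝ, 0 ≤ C ∧ ∀ ε : ℝ, 0 < ε → ε ≤ 1 →
      0 < (∫ x in Ω, |φ x * bub N x₀ ε x| ^ q) ∧
      (ε ^ 2 / ε ^ N) * (∫ y : EuclideanSpace ℝ (Fin N), (1 + ‖y‖ ^ 2) ^ (-(N : ℝ)))
        ^ (((N : ℝ) - 2) / (N : ℝ)) - C ≤
        (∫ x in Ω, |φ x * bub N x₀ ε x| ^ q) ^ (((N : ℝ) - 2) / (N : ℝ)) := by
  have hN' : (4 : ℝ) ≤ N := by exact_mod_cast hN
  have hqpos : 0 < q := by rw [hq]; apply div_pos <;> linarith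
  have hr := φ.rIn_pos
  have hsub : Metric.ball x₀ φ.rIn ⊆ Metric.closedBall x₀ φ.rOut :=
    (Metric.ball_subset_ball φ.rIn_lt_rOut.le).trans Metric.ball_subset_closedBall
  set K := ∫ y : EuclideanSpace ℝ (Fin N), (1 + ‖y‖ ^ 2) ^ (-(N : ℝ)) with hK
  have hKpos : 0 < K := by
    exact kpos N hN
  set θ := ((N : ℝ) - 2) / (N : ℝ) with hθ
  have hθ0 : 0 < θ := div_pos (by linarith) (by linarith)
  have hθ1 : θ ≤ 1 := by rw [hθ, div_le_one (by linarith)]; linarith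
  set c := φ.rIn ^ 2 / (1 + φ.rIn ^ 2) with hc
  have hcpos : 0 < c := by positivity
  refine ⟨K ^ θ * c ^ (-(N : ℝ)), by positivity, fun ε hε hε1 => ?_⟩
  have s0 := aux_s0 N hN x₀ ε hε
  have s01 := aux_s0 N hN x₀ 1 one_pos
  set f : EuclideanSpace ℝ (Fin N) → ℝ := fun x => (ε ^ 2 + ‖x - x₀‖ ^ 2) ^ (-(N : ℝ)) with hf
  set J := ∫ x in Metric.ball x₀ φ.rIn, f x with hJ
  have hJpos : 0 < J := by
    rw [hJ, setIntegral_pos_iff_support_of_nonneg_ae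
      (Eventually.of_forall fun x => by simp only [hf, Pi.zero_apply]; positivity) s0.1.integrableOn]
    have : Function.support f = Set.univ := by
      ext y
      simp only [hf, Function.mem_support, Set.mem_univ, iff_true]
      positivity
    rw [this, Set.univ_inter]
    exact Metric.measure_ball_pos volume x₀ hr
  have hsplit : J + ∫ x in (Metric.ball x₀ φ.rIn)ᶜ, f x = (ε ^ N)⁻¹ * K := by
    rw [← s0.2]; exact integral_add_compl measurableSet_ball s0.1
  have hT : ∫ x in (Metric.ball x₀ φ.rIn)ᶜ, f x ≤ c ^ (-(N : ℝ)) * K := by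
    have hi := s01.1.const_mul (c ^ (-(N : ℝ)))
    calc _ ≤ ∫ x in (Metric.ball x₀ φ.rIn)ᶜ,
          c ^ (-(N : ℝ)) * ((1 : ℝ) ^ 2 + ‖x - x₀‖ ^ 2) ^ (-(N : ℝ)) := by
          refine setIntegral_mono_on s0.1.integrableOn hi.integrableOn
            measurableSet_ball.compl (fun x hx => ?_)
          rw [← Real.mul_rpow hcpos.le (by positivity)]
          refine rpow_neg_anti (by positivity) ?_ (by linarith)
          have hx2 : φ.rIn ≤ ‖x - x₀‖ := by
            rwa [Set.mem_compl_iff, Metric.mem_ball, dist_eq_norm, not_lt] at hx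
          have hx3 : φ.rIn ^ 2 ≤ ‖x - x₀‖ ^ 2 := by gcongr
          rw [hc, div_mul_eq_mul_div, div_le_iff₀ (by positivity)]
          nlinarith [sq_nonneg ε, sq_nonneg φ.rIn, mul_nonneg (sq_nonneg ε) (sq_nonneg φ.rIn)]
      _ ≤ ∫ x, c ^ (-(N : ℝ)) * ((1 : ℝ) ^ 2 + ‖x - x₀‖ ^ 2) ^ (-(N : ℝ)) :=
          setIntegral_le_integral hi (Eventually.of_forall fun x => by positivity)
      _ = _ := by rw [integral_const_mul, s01.2]; simp [hK]
  have hTnn : 0 ≤ ∫ x in (Metric.ball x₀ φ.rIn)ᶜ, f x :=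
    integral_nonneg fun x => by simp only [hf, Pi.zero_apply]; positivity
  have hQ : J ≤ ∫ x in Ω, |φ x * bub N x₀ ε x| ^ q := by
    have hcont : Continuous (fun x => |φ x * bub N x₀ ε x| ^ q) :=
      Continuous.rpow_const ((φ.continuous.mul (bub_contDiff N x₀ ε hε).continuous).abs)
        (fun x => Or.inr hqpos.le)
    have hcs : HasCompactSupport (fun x => |φ x * bub N x₀ ε x| ^ q) := by
      refine φ.hasCompactSupport.mono (fun x hx => ?_)
      rw [Function.mem_support] at hx ⊢
      contrapose! hx
      simp [hx, hqpos.ne']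
    have hint := hcont.integrable_of_hasCompactSupport (μ := volume) hcs
    have : J = ∫ x in Metric.ball x₀ φ.rIn, |φ x * bub N x₀ ε x| ^ q := by
      refine setIntegral_congr_fun measurableSet_ball (fun x hx => ?_)
      rw [φ.one_of_mem_closedBall (Metric.ball_subset_closedBall hx), one_mul,
        abs_of_pos (bub_pos N x₀ x ε hε), bub_q N hN x₀ x ε hε q hq]
    rw [this]
    exact setIntegral_mono_set hint.integrableOn (Eventually.of_forall fun x => by
      simp only [Pi.zero_apply]; positivity) (hsub.trans hP).eventuallyLE
  refine ⟨hJpos.trans_le hQ, le_trans ?_ (Real.rpow_le_rpow hJpos.le hQ hθ0.le)⟩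
  set L := (ε ^ N)⁻¹ * K with hL
  have hLpos : 0 < L := by positivity
  have hJL : J ≤ L := by linarith
  have hLθ : L ^ θ = ε ^ 2 / ε ^ N * K ^ θ := by
    rw [hL, Real.mul_rpow (by positivity) hKpos.le]
    congr 1
    rw [Real.inv_rpow (by positivity), ← Real.rpow_natCast ε N, ← Real.rpow_mul hε.le]
    have : (N : ℝ) * θ = N - 2 := by rw [hθ]; field_simp
    rw [this, Real.rpow_sub hε]
    rw [inv_div]; norm_num
  have h1 : J / L ≤ (J / L) ^ θ := by
    have := Real.rpow_le_rpow_of_exponent_ge (x := J / L) (by positivity)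
      ((div_le_one hLpos).2 hJL) hθ1
    rwa [Real.rpow_one] at this
  rw [Real.div_rpow hJpos.le hLpos.le, le_div_iff₀ (by positivity), hLθ] at h1
  refine le_trans ?_ h1
  have h2 : 1 - c ^ (-(N : ℝ)) * ε ^ N ≤ J / L := by
    rw [le_div_iff₀ hLpos]
    have : (1 - c ^ (-(N : ℝ)) * ε ^ N) * L = L - c ^ (-(N : ℝ)) * K := by
      rw [hL]; field_simp
    rw [this]; linarith
  have h3 : (1 - c ^ (-(N : ℝ)) * ε ^ N) * (ε ^ 2 / ε ^ N * K ^ θ) ≤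
    J / L * (ε ^ 2 / ε ^ N * K ^ θ) := by gcongr
  refine le_trans ?_ h3
  have h4 : (1 - c ^ (-(N : ℝ)) * ε ^ N) * (ε ^ 2 / ε ^ N * K ^ θ) =
    ε ^ 2 / ε ^ N * K ^ θ - (K ^ θ * c ^ (-(N : ℝ))) * ε ^ 2 := by field_simp
  rw [h4]
  have h5 : (K ^ θ * c ^ (-(N : ℝ))) * ε ^ 2 ≤ (K ^ θ * c ^ (-(N : ℝ))) * 1 := by
    have : ε ^ 2 ≤ 1 := pow_le_one₀ hε.le hε1
    gcongr
  linarith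

lemma expand (N : ℕ) (x₀ : EuclideanSpace ℝ (Fin N)) (a : EuclideanSpace ℝ (Fin N) → ℝ)
    (k A η : ℝ) (hA : 0 < A) (hk : 2 < k) (hη : 0 < η)
    (h : Tendsto (fun x => (a x - a x₀ - A * ‖x - x₀‖ ^ k) / ‖x - x₀‖ ^ k) (𝓝[≠] x₀) (𝓝 0)) :
    ∀ᶠ x in 𝓝 x₀, a x ≤ a x₀ + η * ‖x - x₀‖ ^ 2 := by
  have h1 : ∀ᶠ x in 𝓝[≠] x₀, (a x - a x₀ - A * ‖x - x₀‖ ^ k) / ‖x - x₀‖ ^ k < 1 :=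
    h.eventually (gt_mem_nhds one_pos)
  have h2 : ∀ᶠ x in 𝓝 x₀, (A + 1) * ‖x - x₀‖ ^ (k - 2) < η := by
    have hc : ContinuousAt (fun x => (A + 1) * ‖x - x₀‖ ^ (k - 2)) x₀ := by
      refine continuousAt_const.mul (ContinuousAt.rpow_const (by fun_prop) (Or.inr (by linarith)))
    refine hc.eventually (gt_mem_nhds ?_)
    simp [Real.zero_rpow (show k - 2 ≠ 0 by linarith), hη]
  rw [eventually_nhdsWithin_iff] at h1
  filter_upwards [h1, h2] with x hx1 hx2
  by_cases hx : x = x₀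
  · simp [hx]
  have hpos : 0 < ‖x - x₀‖ := norm_pos_iff.2 (sub_ne_zero.2 hx)
  have h3 := hx1 hx
  rw [div_lt_one (by positivity)] at h3
  have h4 : ‖x - x₀‖ ^ k = ‖x - x₀‖ ^ (k - 2) * ‖x - x₀‖ ^ 2 := by
    rw [← Real.rpow_natCast, ← Real.rpow_add hpos]; congr 1; push_cast; ring
  have h5 : (A + 1) * ‖x - x₀‖ ^ (k - 2) * ‖x - x₀‖ ^ 2 ≤ η * ‖x - x₀‖ ^ 2 := by gcongr
  rw [h4] at h3
  linarith

theorem stmt_2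
    (N : ℕ) (hN : 4 ≤ N)
    (Ω : Set (EuclideanSpace ℝ (Fin N)))
    (hΩo : IsOpen Ω) (hΩb : Bornology.IsBounded Ω) (hΩne : Ω.Nonempty)
    (x₀ : EuclideanSpace ℝ (Fin N)) (hx₀ : x₀ ∈ Ω)
    (a b : EuclideanSpace ℝ (Fin N) → ℝ)
    (ha : Continuous a) (hb : Continuous b)
    (hapos : ∀ x ∈ closure Ω, 0 < a x) (hbpos : ∀ x ∈ closure Ω, 0 < b x)
    (γ₀ : ℝ) (haγ : a x₀ = γ₀) (hbγ : b x₀ = γ₀)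
    (hamin : ∀ x ∈ closure Ω, γ₀ ≤ a x) (hbmin : ∀ x ∈ closure Ω, γ₀ ≤ b x)
    (k l A B : ℝ) (hA : 0 < A) (hB : 0 < B)
    (hk : 2 < k) (hl : 2 < l)
    (hexpa : Tendsto (fun x => (a x - a x₀ - A * ‖x - x₀‖ ^ k) / ‖x - x₀‖ ^ k)
      (𝓝[≠] x₀) (𝓝 0))
    (hexpb : Tendsto (fun x => (b x - b x₀ - B * ‖x - x₀‖ ^ l) / ‖x - x₀‖ ^ l)
      (𝓝[≠] x₀) (𝓝 0))
    (q : ℝ) (hq : q = 2 * (N : ℝ) / ((N : ℝ) - 2))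
    (K₁ K₂ S : ℝ)
    (hK₁ : K₁ = ((N : ℝ) - 2) ^ 2 *
      ∫ y : EuclideanSpace ℝ (Fin N), ‖y‖ ^ 2 * (1 + ‖y‖ ^ 2) ^ (-(N : ℝ)))
    (hK₂ : K₂ = (∫ y : EuclideanSpace ℝ (Fin N), (1 + ‖y‖ ^ 2) ^ (-(N : ℝ)))
      ^ (((N : ℝ) - 2) / (N : ℝ)))
    (hS : S = K₁ / K₂)
    (lam : ℝ) (hlam : 0 < lam) :
    ∃ u v : EuclideanSpace ℝ (Fin N) → ℝ,
      ContDiff ℝ (⊤ : ℕ∞) u ∧ HasCompactSupport u ∧ tsupport u ⊆ Ω ∧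
      ContDiff ℝ (⊤ : ℕ∞) v ∧ HasCompactSupport v ∧ tsupport v ⊆ Ω ∧
      (∫ x in Ω, |u x| ^ q) ^ (1 / q) = 1 ∧
      (∫ x in Ω, |v x| ^ q) ^ (1 / q) = 1 ∧
      (1 / 2) * (∫ x in Ω, a x * ‖fderiv ℝ u x‖ ^ 2)
        + (1 / 2) * (∫ x in Ω, b x * ‖fderiv ℝ v x‖ ^ 2)
        - lam * ∫ x in Ω, u x * v x
      < γ₀ * S := by
  have hN' : (4 : ℝ) ≤ N := by exact_mod_cast hN
  have hγ : 0 < γ₀ := haγ ▸ hapos x₀ (subset_closure hx₀)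
  have hqpos : 0 < q := by rw [hq]; apply div_pos <;> linarith
  set η := lam / 2 / ((N : ℝ) - 2) ^ 2 with hηdef
  have hN2 : 0 < (N : ℝ) - 2 := by linarith
  have hη : 0 < η := by positivity
  have hηl : η * ((N : ℝ) - 2) ^ 2 ≤ lam / 2 := by rw [hηdef]; field_simp; rfl
  have hev := (expand N x₀ a k A η hA hk hη hexpa).and
    ((expand N x₀ b l B η hB hl hη hexpb).and (hΩo.mem_nhds hx₀))
  obtain ⟨R, hR, hRb⟩ := Metric.nhds_basis_closedBall.eventually_iff.1 hev
  let φ : ContDiffBump x₀ := ⟨R / 2, R, by positivity, by linarith⟩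
  have hP : Metric.closedBall x₀ φ.rOut ⊆ Ω := fun x hx => (hRb hx).2.2
  obtain ⟨Ca, hCa⟩ := main_a N hN Ω hΩo x₀ φ hP a ha γ₀ η lam hγ hη.le
    (fun x hx => hamin x (subset_closure (hP hx)))
    (fun x hx => by have := (hRb hx).1; rwa [haγ] at this) hηl
  obtain ⟨Cb, hCb⟩ := main_a N hN Ω hΩo x₀ φ hP b hb γ₀ η lam hγ hη.le
    (fun x hx => hbmin x (subset_closure (hP hx)))
    (fun x hx => by have := (hRb hx).2.1; rwa [hbγ] at this) hηl
  obtain ⟨Cd, hCd0, hCd⟩ := den N hN Ω x₀ φ hP q hq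
  obtain ⟨ε, hε, hε1, hbig⟩ := aux_div N hN x₀ φ.rIn φ.rIn_pos
    (((Ca + Cb) / 2 + γ₀ * S * Cd) / (lam / 2))
  rw [div_lt_iff₀ (by positivity)] at hbig
  replace hCa := hCa ε hε
  replace hCb := hCb ε hε
  obtain ⟨hQpos, hQ⟩ := hCd ε hε hε1
  rw [← hK₁] at hCa hCb
  rw [← hK₂] at hQ
  have hK₁nn : 0 ≤ K₁ := by
    rw [hK₁]; exact mul_nonneg (sq_nonneg _) (integral_nonneg fun y => by
      simp only [Pi.zero_apply]; positivity)
  have hK₂nn : 0 ≤ K₂ := by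
    rw [hK₂]; exact Real.rpow_nonneg (integral_nonneg fun y => by
      simp only [Pi.zero_apply]; positivity) _
  have hSnn : 0 ≤ S := by rw [hS]; positivity
  set u : EuclideanSpace ℝ (Fin N) → ℝ := fun y => φ y * bub N x₀ ε y with hu
  set Q := ∫ x in Ω, |φ x * bub N x₀ ε x| ^ q with hQdef
  set I := ∫ x in Metric.ball x₀ φ.rIn, (ε ^ 2 + ‖x - x₀‖ ^ 2) ^ (-((N : ℝ) - 2)) with hI
  have hK₂pos : K₂ ≠ 0 := by
    have hKpos : 0 < ∫ y : EuclideanSpace ℝ (Fin N), (1 + ‖y‖ ^ 2) ^ (-(N : ℝ)) := kpos N hN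
    rw [hK₂]; positivity
  have hud : ContDiff ℝ (⊤ : ℕ∞) u := φ.contDiff.mul (bub_contDiff N x₀ ε hε)
  have hucs : HasCompactSupport u := φ.hasCompactSupport.mul_right
  have huts : tsupport u ⊆ Ω := by
    refine (tsupport_mul_subset_left (f := φ)).trans ?_
    rw [φ.tsupport_eq]; exact hP
  -- L2 lower bound
  have hL2 : I ≤ ∫ x in Ω, u x * u x := by
    have hint : Integrable (fun x => u x * u x) :=
      (hud.continuous.mul hud.continuous).integrable_of_hasCompactSupport hucs.mul_right
    have hsub : Metric.ball x₀ φ.rIn ⊆ Metric.closedBall x₀ φ.rOut :=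
      (Metric.ball_subset_ball φ.rIn_lt_rOut.le).trans Metric.ball_subset_closedBall
    have : I = ∫ x in Metric.ball x₀ φ.rIn, u x * u x := by
      refine setIntegral_congr_fun measurableSet_ball (fun x hx => ?_)
      simp only [hu]
      rw [φ.one_of_mem_closedBall (Metric.ball_subset_closedBall hx), one_mul, ← sq,
        bub_sq N x₀ x ε hε]
    rw [this]
    exact setIntegral_mono_set hint.integrableOn (Eventually.of_forall fun x => by
      simp only [Pi.zero_apply]; exact mul_self_nonneg _) (hsub.trans hP).eventuallyLE
  set D := Q ^ (1 / q) with hD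
  have hDpos : 0 < D := by positivity
  have hDq : D ^ q = Q := by
    rw [hD, ← Real.rpow_mul hQpos.le, one_div_mul_cancel hqpos.ne', Real.rpow_one]
  have hD2 : D ^ 2 = Q ^ (((N : ℝ) - 2) / (N : ℝ)) := by
    rw [hD, ← Real.rpow_natCast, ← Real.rpow_mul hQpos.le]
    congr 1
    rw [hq]; push_cast; field_simp
  have hnorm : (∫ x in Ω, |D⁻¹ * u x| ^ q) ^ (1 / q) = 1 := by
    have : ∀ x, |D⁻¹ * u x| ^ q = Q⁻¹ * |u x| ^ q := fun x => by
      rw [abs_mul, abs_of_pos (inv_pos.2 hDpos), Real.mul_rpow (by positivity) (abs_nonneg _),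
        Real.inv_rpow hDpos.le, hDq]
    simp only [this]
    rw [integral_const_mul, ← hQdef, inv_mul_cancel₀ hQpos.ne', Real.one_rpow]
  have hfd : ∀ x, ‖fderiv ℝ (fun y => D⁻¹ * u y) x‖ ^ 2 = (D ^ 2)⁻¹ * ‖fderiv ℝ u x‖ ^ 2 := by
    intro x
    rw [fderiv_const_mul (hud.differentiable (by simp) x), norm_smul, mul_pow,
      Real.norm_of_nonneg (by positivity), inv_pow]
  have hw1 : ContDiff ℝ (⊤ : ℕ∞) (fun y => D⁻¹ * u y) := contDiff_const.mul hud
  have hw2 : HasCompactSupport (fun y => D⁻¹ * u y) := hucs.mul_left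
  have hw3 : tsupport (fun y => D⁻¹ * u y) ⊆ Ω :=
    (tsupport_mul_subset_right (f := fun _ => D⁻¹) (g := u)).trans huts
  refine ⟨fun y => D⁻¹ * u y, fun y => D⁻¹ * u y, hw1, hw2, hw3, hw1, hw2, hw3, hnorm, hnorm, ?_⟩
  have ea : ∫ x in Ω, a x * ‖fderiv ℝ (fun y => D⁻¹ * u y) x‖ ^ 2 =
      (D ^ 2)⁻¹ * ∫ x in Ω, a x * ‖fderiv ℝ u x‖ ^ 2 := by
    rw [← integral_const_mul]; congr 1; ext x; rw [hfd]; ring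
  have eb : ∫ x in Ω, b x * ‖fderiv ℝ (fun y => D⁻¹ * u y) x‖ ^ 2 =
      (D ^ 2)⁻¹ * ∫ x in Ω, b x * ‖fderiv ℝ u x‖ ^ 2 := by
    rw [← integral_const_mul]; congr 1; ext x; rw [hfd]; ring
  have ec : ∫ x in Ω, D⁻¹ * u x * (D⁻¹ * u x) = (D ^ 2)⁻¹ * ∫ x in Ω, u x * u x := by
    rw [← integral_const_mul]; congr 1; ext x; ring
  rw [ea, eb, ec]
  set Ia := ∫ x in Ω, a x * ‖fderiv ℝ u x‖ ^ 2
  set Ib := ∫ x in Ω, b x * ‖fderiv ℝ u x‖ ^ 2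
  set Iu := ∫ x in Ω, u x * u x
  have hD2pos : 0 < D ^ 2 := by positivity
  have hform : 1 / 2 * ((D ^ 2)⁻¹ * Ia) + 1 / 2 * ((D ^ 2)⁻¹ * Ib) - lam * ((D ^ 2)⁻¹ * Iu) =
      (1 / 2 * Ia + 1 / 2 * Ib - lam * Iu) / D ^ 2 := by
    rw [div_eq_inv_mul]; ring
  rw [hform, div_lt_iff₀ hD2pos]
  rw [← hD2] at hQ
  have h1 : γ₀ * S * (ε ^ 2 / ε ^ N * K₂ - Cd) ≤ γ₀ * S * D ^ 2 :=
    mul_le_mul_of_nonneg_left hQ (by positivity)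
  have h2 : γ₀ * S * (ε ^ 2 / ε ^ N * K₂) = γ₀ * (ε ^ 2 / ε ^ N * K₁) := by
    rw [hS]; field_simp
  have h3 := mul_le_mul_of_nonneg_left hL2 hlam.le
  linarith
end
end

section
/- Let N ≥ 5 be an integer, Ω ⊂ ℝ^N a nonempty bounded open set, x₀ ∈ Ω, and a, b : ℝ^N → ℝ continuous functions positive on the closure of Ω with a(x₀) = b(x₀) = γ₀ and γ₀ = min_{x∈Ω̄} a(x) = min_{x∈Ω̄} b(x). Suppose a admits the expansion of order k at x₀ with coefficient A_k > 0 and b admits the expansion of order l at x₀ with coefficient B_l > 0, where k = 2 and l > 2. Set m_N := N(N−2)(N+2)/(8(N−1)). Then for every λ > m_N A₂ there exist smooth functions u, v compactly supported in Ω with ‖u‖_{L^q(Ω)} = ‖v‖_{L^q(Ω)} = 1 such that F_λ(u,v) < γ₀ S. -/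
open MeasureTheory Real Filter Topology

noncomputable section

def thc (c t : ℝ) : ℝ := c * ((t / c - 1) * expNegInvGlue (t / c - 1))

lemma glue_deriv (s : ℝ) : ∃ d, HasDerivAt (fun s => s * expNegInvGlue s) d s ∧ |d| ≤ 1 := by
  have hdiff : DifferentiableAt ℝ expNegInvGlue s :=
    (expNegInvGlue.contDiff (n := 1)).differentiable (by norm_num) s
  rcases lt_trichotomy s 0 with hs | hs | hs
  · refine ⟨0, ?_, by simp⟩
    have : (fun s => s * expNegInvGlue s) =ᶠ[𝓝 s] fun _ => 0 := by
      filter_upwards [Iio_mem_nhds hs] with x hx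
      simp [expNegInvGlue.zero_of_nonpos (le_of_lt hx)]
    exact (hasDerivAt_const s (0:ℝ)).congr_of_eventuallyEq this
  · subst hs
    refine ⟨_, (hasDerivAt_id (0:ℝ)).mul hdiff.hasDerivAt, ?_⟩
    simp [expNegInvGlue.zero_of_nonpos]
  · refine ⟨exp (-s⁻¹) * (1 + s⁻¹), ?_, ?_⟩
    · have h1 : HasDerivAt (fun s => s * exp (-s⁻¹)) (1 * exp (-s⁻¹) + s * (exp (-s⁻¹) * -(-(s ^ 2)⁻¹))) s :=
        (hasDerivAt_id s).mul ((hasDerivAt_inv hs.ne').neg.exp)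
      have : (fun s => s * expNegInvGlue s) =ᶠ[𝓝 s] fun s => s * exp (-s⁻¹) := by
        filter_upwards [Ioi_mem_nhds hs] with x hx
        have : ¬ x ≤ 0 := not_le.mpr hx
        simp [expNegInvGlue, this]
      refine (h1.congr_of_eventuallyEq this).congr_deriv ?_
      field_simp
    · have h0 : 0 < s⁻¹ := inv_pos.mpr hs
      rw [abs_of_nonneg (by positivity)]
      have h2 : 1 + s⁻¹ ≤ exp (s⁻¹) := by linarith [add_one_le_exp s⁻¹]
      calc exp (-s⁻¹) * (1 + s⁻¹) ≤ exp (-s⁻¹) * exp (s⁻¹) := by gcongr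
        _ = 1 := by rw [← exp_add]; simp

lemma glue_nonneg (s : ℝ) : 0 ≤ s * expNegInvGlue s := by
  rcases le_total s 0 with h | h
  · simp [expNegInvGlue.zero_of_nonpos h]
  · exact mul_nonneg h (expNegInvGlue.nonneg s)

lemma glue_ge (s : ℝ) : s - 1 ≤ s * expNegInvGlue s := by
  rcases le_or_gt s 0 with h | h
  · simp only [expNegInvGlue.zero_of_nonpos h]; linarith
  · have : ¬ s ≤ 0 := not_le.mpr h
    simp only [expNegInvGlue, this, if_false]
    have h2 := add_one_le_exp (-s⁻¹)
    calc s - 1 = s * (-s⁻¹ + 1) := by field_simp; ring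
      _ ≤ _ := by gcongr

lemma glue_le (s : ℝ) (hs : -1 ≤ s) : s * expNegInvGlue s ≤ s + 1 := by
  rcases le_or_gt s 0 with h | h
  · simp only [expNegInvGlue.zero_of_nonpos h]; linarith
  · have : ¬ s ≤ 0 := not_le.mpr h
    simp only [expNegInvGlue, this, if_false]
    have h2 : exp (-s⁻¹) ≤ 1 := by
      rw [exp_le_one_iff]; have := inv_pos.mpr h; linarith
    nlinarith

lemma thc_nonneg {c : ℝ} (hc : 0 < c) (t : ℝ) : 0 ≤ thc c t :=
  mul_nonneg hc.le (glue_nonneg _)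

lemma thc_ge {c : ℝ} (hc : 0 < c) (t : ℝ) : t - 2 * c ≤ thc c t := by
  have := mul_le_mul_of_nonneg_left (glue_ge (t / c - 1)) hc.le
  unfold thc
  refine le_trans (le_of_eq ?_) this
  field_simp; ring

lemma thc_le {c : ℝ} (hc : 0 < c) {t : ℝ} (ht : 0 ≤ t) : thc c t ≤ t := by
  have h1 : 0 ≤ t / c := by positivity
  have := mul_le_mul_of_nonneg_left (glue_le (t / c - 1) (by linarith)) hc.le
  unfold thc
  refine le_trans this (le_of_eq ?_)
  field_simp; ring

lemma thc_zero {c : ℝ} (hc : 0 < c) {t : ℝ} (ht : t ≤ c) : thc c t = 0 := by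
  have : t / c ≤ 1 := (div_le_one hc).mpr ht
  simp [thc, expNegInvGlue.zero_of_nonpos (x := t / c - 1) (by linarith)]

lemma thc_contDiff (c : ℝ) : ContDiff ℝ (⊤ : ℕ∞) (thc c) := by
  have h : ContDiff ℝ (⊤ : ℕ∞) (fun t : ℝ => t / c - 1) := by fun_prop
  exact contDiff_const.mul (h.mul ((expNegInvGlue.contDiff (n := ⊤)).comp h))

lemma thc_deriv {c : ℝ} (hc : 0 < c) (t : ℝ) : ∃ d, HasDerivAt (thc c) d t ∧ |d| ≤ 1 := by
  obtain ⟨d, h1, h2⟩ := glue_deriv (t / c - 1)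
  refine ⟨d, ?_, h2⟩
  have h : HasDerivAt (fun t : ℝ => t / c - 1) (1 / c) t :=
    ((hasDerivAt_id t).div_const c).sub_const 1
  have := (HasDerivAt.comp t h1 h).const_mul c
  refine this.congr_deriv ?_
  field_simp

lemma intE {N : ℕ} {s : ℝ} (hs : (N : ℝ) < 2 * s) :
    Integrable (fun y : EuclideanSpace ℝ (Fin N) => (1 + ‖y‖ ^ 2) ^ (-s)) := by
  have := integrable_rpow_neg_one_add_norm_sq (E := EuclideanSpace ℝ (Fin N))
    (μ := volume) (r := 2 * s) (by simpa using hs)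
  refine this.congr (ae_of_all _ fun y => ?_)
  simp only [show -(2 * s) / 2 = -s by ring]

lemma intE_mul {N : ℕ} {s : ℝ} (j : ℕ) (hs : (N : ℝ) < 2 * (s - j)) :
    Integrable (fun y : EuclideanSpace ℝ (Fin N) => (‖y‖ ^ 2) ^ j * (1 + ‖y‖ ^ 2) ^ (-s)) := by
  refine (intE hs).mono' ?_ (ae_of_all _ fun y => ?_)
  · refine Continuous.aestronglyMeasurable ?_
    refine Continuous.mul (by fun_prop) (Continuous.rpow_const (by fun_prop) fun y => Or.inl ?_)
    positivity
  · rw [norm_of_nonneg (by positivity)]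
    have h : -(s - j) = (j : ℝ) + -s := by ring
    rw [h, rpow_add (by positivity), rpow_natCast]
    gcongr
    linarith

lemma int1 (p : ℕ) (s : ℝ) (hs : (p : ℝ) + 1 < 2 * s) :
    Integrable (fun r : ℝ => r ^ p * (1 + r ^ 2) ^ (-s)) := by
  have := integrable_rpow_neg_one_add_norm_sq (E := ℝ)
    (μ := volume) (r := 2 * s - p) (by simp; linarith)
  refine this.mono' ?_ (ae_of_all _ fun y => ?_)
  · refine Continuous.aestronglyMeasurable ?_
    refine Continuous.mul (by fun_prop) (Continuous.rpow_const (by fun_prop) fun y => Or.inl ?_)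
    positivity
  · rw [norm_mul, norm_pow, norm_of_nonneg (r := (1 + y ^ 2) ^ (-s)) (by positivity)]
    have h : -(2 * s - p) / 2 = (p : ℝ) / 2 + -s := by ring
    rw [h, rpow_add (by positivity)]
    simp only [norm_eq_abs, sq_abs]
    gcongr
    rw [div_eq_inv_mul, rpow_mul (by positivity), rpow_natCast]
    gcongr
    rw [← one_div, ← sqrt_eq_rpow]
    apply abs_le_sqrt; linarith

lemma ibp1 (p : ℕ) (s : ℝ) (hs : (p : ℝ) + 1 < 2 * s) :
    ((p : ℝ) + 1) * ∫ r in Set.Ioi (0:ℝ), r ^ p * (1 + r ^ 2) ^ (-s)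
      = 2 * s * ∫ r in Set.Ioi (0:ℝ), r ^ (p + 2) * (1 + r ^ 2) ^ (-(s + 1)) := by
  have i1 := (int1 p s hs).integrableOn (s := Set.Ioi 0)
  have i2 := (int1 (p + 2) (s + 1) (by push_cast; linarith)).integrableOn (s := Set.Ioi 0)
  have key := integral_Ioi_of_hasDerivAt_of_tendsto (a := 0) (m := 0)
    (f := fun r : ℝ => r ^ (p + 1) * (1 + r ^ 2) ^ (-s))
    (f' := fun r : ℝ => ((p : ℝ) + 1) * (r ^ p * (1 + r ^ 2) ^ (-s))
      - 2 * s * (r ^ (p + 2) * (1 + r ^ 2) ^ (-(s + 1)))) ?_ ?_ ?_ ?_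
  · rw [integral_sub (i1.const_mul _) (i2.const_mul _), integral_const_mul, integral_const_mul] at key
    rw [zero_pow (by omega), zero_mul, sub_zero] at key
    linarith
  · refine Continuous.continuousWithinAt ?_
    refine Continuous.mul (by fun_prop) (Continuous.rpow_const (by fun_prop) fun y => Or.inl ?_)
    positivity
  · intro r hr
    have h1 : HasDerivAt (fun r : ℝ => 1 + r ^ 2) (2 * r) r := by
      simpa using (hasDerivAt_pow 2 r).const_add 1
    have h2 := (hasDerivAt_pow (p + 1) r).mul
      (h1.rpow_const (p := -s) (Or.inl (by positivity)))
    refine h2.congr_deriv ?_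
    simp only [Nat.add_sub_cancel, Nat.cast_add, Nat.cast_one]
    rw [show -s - 1 = -(s + 1) by ring]
    ring
  · exact (i1.const_mul _).sub (i2.const_mul _)
  · have h := tendsto_rpow_neg_atTop (y := 2 * s - (p + 1)) (by linarith)
    refine squeeze_zero' (eventually_ge_atTop 0 |>.mono fun r hr => by positivity) ?_ h
    filter_upwards [eventually_gt_atTop 0] with r hr
    have e : -(2 * s - (p + 1)) = ((p + 1 : ℕ) : ℝ) + 2 * (-s) := by push_cast; ring
    rw [e, rpow_add hr, rpow_natCast, rpow_mul hr.le]
    have hs0 : (0:ℝ) ≤ s := by have : (0:ℝ) ≤ p := by positivity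
                               linarith
    refine mul_le_mul_of_nonneg_left ?_ (by positivity)
    refine rpow_le_rpow_of_nonpos (by positivity) ?_ (by linarith)
    have : r ^ (2:ℝ) = r ^ (2:ℕ) := rpow_two r
    rw [this]; linarith

lemma ratio (N : ℕ) (hN : 5 ≤ N) :
    (N : ℝ) * (N + 2) * ∫ y : EuclideanSpace ℝ (Fin N), (1 + ‖y‖ ^ 2) ^ (-((N : ℝ) - 2))
     = 4 * ((N : ℝ) - 1) * (N - 2) *
      ∫ y : EuclideanSpace ℝ (Fin N), (‖y‖ ^ 2) ^ 2 * (1 + ‖y‖ ^ 2) ^ (-(N : ℝ)) := by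
  have : Nonempty (Fin N) := ⟨⟨0, by omega⟩⟩
  have hN' : (5:ℝ) ≤ N := by exact_mod_cast hN
  rw [integral_fun_norm_addHaar volume (fun r : ℝ => (1 + r ^ 2) ^ (-((N : ℝ) - 2))),
    integral_fun_norm_addHaar volume (fun r : ℝ => (r ^ 2) ^ 2 * (1 + r ^ 2) ^ (-(N : ℝ)))]
  simp only [finrank_euclideanSpace, Fintype.card_fin, smul_eq_mul, nsmul_eq_mul]
  obtain ⟨n, rfl⟩ : ∃ n, N = n + 1 := ⟨N - 1, by omega⟩
  simp only [Nat.add_sub_cancel]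
  push_cast at *
  have h1 := ibp1 n ((n:ℝ) + 1 - 2) (by linarith)
  have h2 := ibp1 (n + 2) ((n:ℝ) + 1 - 2 + 1) (by push_cast; linarith)
  push_cast at h2
  rw [show (n:ℝ) + 1 - 2 + 1 + 1 = n + 1 by ring] at h2
  have h3 : ∀ r : ℝ, r ^ n * ((r ^ 2) ^ 2 * (1 + r ^ 2) ^ (-((n:ℝ) + 1)))
    = r ^ (n + 2 + 2) * (1 + r ^ 2) ^ (-((n:ℝ) + 1)) := fun r => by ring
  simp only [h3]
  generalize (∫ r in Set.Ioi (0:ℝ), r ^ n * (1 + r ^ 2) ^ (-((n:ℝ) + 1 - 2))) = X at *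
  generalize (∫ r in Set.Ioi (0:ℝ), r ^ (n + 2) * (1 + r ^ 2) ^ (-((n:ℝ) + 1 - 2 + 1))) = Y at *
  generalize (∫ r in Set.Ioi (0:ℝ), r ^ (n + 2 + 2) * (1 + r ^ 2) ^ (-((n:ℝ) + 1))) = Z at *
  generalize volume.real (Metric.ball (0 : EuclideanSpace ℝ (Fin (n+1))) 1) = V
  linear_combination ((n:ℝ) + 3) * (n + 1) * V * h1 + 2 * ((n:ℝ) - 1) * (n + 1) * V * h2

def phi (N : ℕ) (y : EuclideanSpace ℝ (Fin N)) : ℝ := (1 + ‖y‖ ^ 2) ^ (-(((N : ℝ) - 2) / 2))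

lemma phi_pos (N : ℕ) (y : EuclideanSpace ℝ (Fin N)) : 0 < phi N y := by
  unfold phi; positivity

lemma phi_contDiff (N : ℕ) : ContDiff ℝ (⊤ : ℕ∞) (phi N) := by
  unfold phi
  refine ContDiff.rpow_const_of_ne ?_ fun y => by positivity
  exact contDiff_const.add (contDiff_norm_sq ℝ)

lemma phi_rpow (N : ℕ) (y : EuclideanSpace ℝ (Fin N)) (p : ℝ) :
    phi N y ^ p = (1 + ‖y‖ ^ 2) ^ (-((((N : ℝ) - 2) / 2) * p)) := by
  unfold phi
  rw [← rpow_mul (by positivity)]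
  congr 1; ring

def Wf (N : ℕ) (c δ : ℝ) (x₀ : EuclideanSpace ℝ (Fin N)) (x : EuclideanSpace ℝ (Fin N)) : ℝ :=
  thc c (phi N (δ⁻¹ • (x - x₀)))

lemma Wf_contDiff (N : ℕ) (c δ : ℝ) (x₀ : EuclideanSpace ℝ (Fin N)) :
    ContDiff ℝ (⊤ : ℕ∞) (Wf N c δ x₀) := by
  have h : ContDiff ℝ (⊤ : ℕ∞) (fun x : EuclideanSpace ℝ (Fin N) => δ⁻¹ • (x - x₀)) := by fun_prop
  exact (thc_contDiff c).comp ((phi_contDiff N).comp h)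

lemma Wf_fderiv (N : ℕ) (hN : 5 ≤ N) {c δ : ℝ} (hc : 0 < c) (hδ : 0 < δ)
    (x₀ x : EuclideanSpace ℝ (Fin N)) :
    ‖fderiv ℝ (Wf N c δ x₀) x‖ ^ 2 ≤ (δ⁻¹) ^ 2 * (((N : ℝ) - 2) ^ 2 *
      (‖δ⁻¹ • (x - x₀)‖ ^ 2 * (1 + ‖δ⁻¹ • (x - x₀)‖ ^ 2) ^ (-(N : ℝ)))) := by
  have hN' : (5:ℝ) ≤ N := by exact_mod_cast hN
  set y := δ⁻¹ • (x - x₀) with hy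
  obtain ⟨d, hd, hd1⟩ := thc_deriv hc (phi N y)
  have hphi : HasFDerivAt (phi N)
      ((-(((N : ℝ) - 2) / 2) * (1 + ‖y‖ ^ 2) ^ (-(((N : ℝ) - 2) / 2) - 1)) •
        (2 • (innerSL ℝ) y)) y := by
    have h1 : HasFDerivAt (fun y : EuclideanSpace ℝ (Fin N) => 1 + ‖y‖ ^ 2)
      (2 • (innerSL ℝ) y) y := (hasStrictFDerivAt_norm_sq y).hasFDerivAt.const_add 1
    have h2 := (Real.hasDerivAt_rpow_const (x := 1 + ‖y‖ ^ 2) (p := -(((N : ℝ) - 2) / 2))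
      (Or.inl (by positivity)))
    exact h2.comp_hasFDerivAt y h1
  have hlin : HasFDerivAt (fun x : EuclideanSpace ℝ (Fin N) => δ⁻¹ • (x - x₀))
      (δ⁻¹ • ContinuousLinearMap.id ℝ (EuclideanSpace ℝ (Fin N))) x :=
    ((hasFDerivAt_id x).sub_const x₀).const_smul δ⁻¹
  have hW : HasFDerivAt (Wf N c δ x₀) _ x :=
    HasFDerivAt.comp (g := thc c ∘ phi N) x (hd.comp_hasFDerivAt y hphi) hlin
  rw [hW.fderiv]
  clear_value y
  have hb : ‖(d • ((-(((N : ℝ) - 2) / 2) * (1 + ‖y‖ ^ 2) ^ (-(((N : ℝ) - 2) / 2) - 1)) •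
        (2 • (innerSL ℝ) y))).comp
        (δ⁻¹ • ContinuousLinearMap.id ℝ (EuclideanSpace ℝ (Fin N)))‖
      ≤ δ⁻¹ * (((N : ℝ) - 2) * (‖y‖ * (1 + ‖y‖ ^ 2) ^ (-((N : ℝ) / 2)))) := by
    rw [ContinuousLinearMap.comp_smul, ContinuousLinearMap.comp_id]
    rw [norm_smul, norm_smul, norm_smul, ← Nat.cast_smul_eq_nsmul ℝ, norm_smul, innerSL_apply_norm]
    rw [norm_of_nonneg (r := δ⁻¹) (by positivity)]
    rw [norm_mul, norm_neg, norm_of_nonneg (r := ((N : ℝ) - 2) / 2) (by linarith),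
      norm_of_nonneg (r := (1 + ‖y‖ ^ 2) ^ (-(((N : ℝ) - 2) / 2) - 1)) (by positivity)]
    rw [show -(((N : ℝ) - 2) / 2) - 1 = -((N : ℝ) / 2) by ring]
    refine mul_le_mul_of_nonneg_left ?_ (by positivity)
    have h3 : 0 ≤ ((N : ℝ) - 2) * (‖y‖ * (1 + ‖y‖ ^ 2) ^ (-((N : ℝ) / 2))) :=
      mul_nonneg (by linarith) (by positivity)
    calc ‖d‖ * (((N : ℝ) - 2) / 2 * (1 + ‖y‖ ^ 2) ^ (-((N : ℝ) / 2)) * (‖((2:ℕ):ℝ)‖ * ‖y‖))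
        = ‖d‖ * (((N : ℝ) - 2) * (‖y‖ * (1 + ‖y‖ ^ 2) ^ (-((N : ℝ) / 2)))) := by
          rw [show ‖((2:ℕ):ℝ)‖ = 2 by norm_num]; ring
      _ ≤ 1 * _ := mul_le_mul_of_nonneg_right hd1 h3
      _ = _ := one_mul _
  refine (pow_le_pow_left₀ (norm_nonneg _) hb 2).trans (le_of_eq ?_)
  have h4 : ((1 + ‖y‖ ^ 2) ^ (-((N : ℝ) / 2))) ^ 2 = (1 + ‖y‖ ^ 2) ^ (-(N : ℝ)) := by
    rw [← rpow_natCast, ← rpow_mul (by positivity)]; congr 1; push_cast; ring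
  rw [← h4]; ring

lemma Wf_nonneg (N : ℕ) {c : ℝ} (hc : 0 < c) (δ : ℝ) (x₀ x : EuclideanSpace ℝ (Fin N)) :
    0 ≤ Wf N c δ x₀ x := thc_nonneg hc _

/-- support of the truncated bubble -/
lemma Wf_supp (N : ℕ) (hN : 5 ≤ N) {r δ : ℝ} (hr : 0 < r) (hδ : 0 < δ)
    (x₀ : EuclideanSpace ℝ (Fin N)) :
    tsupport (Wf N ((1 + (r / δ) ^ 2) ^ (-(((N : ℝ) - 2) / 2))) δ x₀) ⊆
      Metric.closedBall x₀ r := by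
  have hN' : (5:ℝ) ≤ N := by exact_mod_cast hN
  refine closure_minimal ?_ Metric.isClosed_closedBall
  intro x hx
  by_contra hcon
  apply hx
  apply thc_zero (by positivity)
  rw [Metric.mem_closedBall, dist_eq_norm, not_le] at hcon
  unfold phi
  refine rpow_le_rpow_of_nonpos (by positivity) ?_ (by linarith)
  rw [norm_smul, norm_of_nonneg (by positivity), ← div_eq_inv_mul]
  gcongr

lemma scalar_q {t c w q : ℝ} (ht : 0 < t) (hc : 0 < c) (hw : 0 ≤ w) (hw2 : t - 2 * c ≤ w)
    (hq : 1 ≤ q) : t ^ q - 2 * q * c * t ^ (q - 1) ≤ w ^ q := by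
  have e : t ^ q = t ^ (q - 1) * t := by
    rw [← rpow_add_one ht.ne']; congr 1; ring
  have hp : 0 < t ^ (q - 1) := by positivity
  rcases le_total (2 * c) t with h | h
  · have h1 := one_add_mul_self_le_rpow_one_add (s := -(2 * c / t)) (p := q)
      (by have := (div_le_one ht).mpr h
          linarith) hq
    have h2 : (t * (1 + -(2 * c / t))) ^ q ≤ w ^ q := by
      refine rpow_le_rpow ?_ ?_ (by linarith)
      · have := (div_le_one ht).mpr h
        exact mul_nonneg ht.le (by linarith)
      · refine le_trans (le_of_eq ?_) hw2
        field_simp; ring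
    refine le_trans ?_ h2
    rw [mul_rpow ht.le (by have := (div_le_one ht).mpr h
                           linarith)]
    refine le_trans (le_of_eq ?_) (mul_le_mul_of_nonneg_left h1 (by positivity))
    rw [e]; field_simp; ring
  · have : t ^ q - 2 * q * c * t ^ (q - 1) = t ^ (q - 1) * (t - 2 * q * c) := by rw [e]; ring
    rw [this]
    refine le_trans (mul_nonpos_of_nonneg_of_nonpos hp.le ?_) (by positivity)
    nlinarith

lemma chvar (N : ℕ) (f : EuclideanSpace ℝ (Fin N) → ℝ) {δ : ℝ} (hδ : 0 < δ)
    (x₀ : EuclideanSpace ℝ (Fin N)) :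
    ∫ x, f (δ⁻¹ • (x - x₀)) = δ ^ N * ∫ y, f y := by
  rw [integral_sub_right_eq_self (fun x => f (δ⁻¹ • x)) x₀,
    Measure.integral_comp_inv_smul_of_nonneg volume f hδ.le]
  simp

lemma chvar_int (N : ℕ) {f : EuclideanSpace ℝ (Fin N) → ℝ} (hf : Integrable f) {δ : ℝ} (hδ : 0 < δ)
    (x₀ : EuclideanSpace ℝ (Fin N)) :
    Integrable (fun x => f (δ⁻¹ • (x - x₀))) :=
  (hf.comp_smul (R := δ⁻¹) (by positivity)).comp_sub_right x₀

lemma Q_lower (N : ℕ) (hN : 5 ≤ N) {c : ℝ} (hc : 0 < c) (q : ℝ)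
    (hq : q = 2 * (N : ℝ) / ((N : ℝ) - 2)) :
    (∫ y : EuclideanSpace ℝ (Fin N), (1 + ‖y‖ ^ 2) ^ (-(N : ℝ))) - 2 * q * c *
      (∫ y : EuclideanSpace ℝ (Fin N), (1 + ‖y‖ ^ 2) ^ (-(((N : ℝ) + 2) / 2)))
      ≤ ∫ y : EuclideanSpace ℝ (Fin N), |thc c (phi N y)| ^ q := by
  have hN' : (5:ℝ) ≤ N := by exact_mod_cast hN
  have hN2 : (N:ℝ) - 2 ≠ 0 := by linarith
  have hq1 : 1 ≤ q := by rw [hq, le_div_iff₀ (by linarith)]; linarith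
  have i1 : Integrable (fun y : EuclideanSpace ℝ (Fin N) => (1 + ‖y‖ ^ 2) ^ (-(N : ℝ))) :=
    intE (by linarith)
  have i2 : Integrable (fun y : EuclideanSpace ℝ (Fin N) =>
    (1 + ‖y‖ ^ 2) ^ (-(((N : ℝ) + 2) / 2))) := intE (by linarith)
  have e1 : ∀ y : EuclideanSpace ℝ (Fin N), (1 + ‖y‖ ^ 2) ^ (-(N : ℝ)) = phi N y ^ q := by
    intro y; rw [phi_rpow]; congr 2; rw [hq]; field_simp
  have e2 : ∀ y : EuclideanSpace ℝ (Fin N), (1 + ‖y‖ ^ 2) ^ (-(((N : ℝ) + 2) / 2))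
      = phi N y ^ (q - 1) := by
    intro y; rw [phi_rpow]; congr 2; rw [hq]; field_simp; ring
  rw [← integral_const_mul, ← integral_sub i1 (i2.const_mul _)]
  refine integral_mono (i1.sub (i2.const_mul _)) ?_ fun y => ?_
  · refine i1.mono' ?_ (ae_of_all _ fun y => ?_)
    · refine Continuous.aestronglyMeasurable ?_
      refine Continuous.rpow_const ?_ fun y => Or.inr (by linarith)
      exact ((thc_contDiff c).continuous.comp (phi_contDiff N).continuous).abs
    · rw [norm_of_nonneg (by positivity), e1, abs_of_nonneg (thc_nonneg hc _)]
      exact rpow_le_rpow (thc_nonneg hc _) (thc_le hc (phi_pos N y).le) (by linarith)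
  · simp only
    rw [abs_of_nonneg (thc_nonneg hc _), e1, e2]
    exact scalar_q (phi_pos N y) hc (thc_nonneg hc _) (thc_ge hc _) hq1

lemma sq_lim (N : ℕ) (hN : 5 ≤ N) :
    Tendsto (fun c : ℝ => ∫ y : EuclideanSpace ℝ (Fin N), thc c (phi N y) ^ 2) (𝓝[>] 0)
      (𝓝 (∫ y : EuclideanSpace ℝ (Fin N), (1 + ‖y‖ ^ 2) ^ (-((N : ℝ) - 2)))) := by
  have hN' : (5:ℝ) ≤ N := by exact_mod_cast hN
  have e1 : ∀ y : EuclideanSpace ℝ (Fin N), (1 + ‖y‖ ^ 2) ^ (-((N : ℝ) - 2)) = phi N y ^ 2 := by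
    intro y; rw [← rpow_two (phi N y), phi_rpow]; congr 2; ring
  refine tendsto_integral_filter_of_dominated_convergence
    (fun y => (1 + ‖y‖ ^ 2) ^ (-((N : ℝ) - 2))) ?_ ?_ (intE (by linarith)) ?_
  · refine Eventually.of_forall fun c => Continuous.aestronglyMeasurable ?_
    exact ((thc_contDiff c).continuous.comp (phi_contDiff N).continuous).pow 2
  · filter_upwards [self_mem_nhdsWithin] with c hc
    refine ae_of_all _ fun y => ?_
    rw [norm_of_nonneg (by positivity), e1]
    exact pow_le_pow_left₀ (thc_nonneg hc _) (thc_le hc (phi_pos N y).le) 2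
  · refine ae_of_all _ fun y => ?_
    rw [e1]
    refine Tendsto.pow ?_ 2
    have h1 : Tendsto (fun c : ℝ => phi N y - 2 * c) (𝓝[>] 0) (𝓝 (phi N y)) := by
      have : Tendsto (fun c : ℝ => phi N y - 2 * c) (𝓝 0) (𝓝 (phi N y - 2 * 0)) :=
        (by fun_prop : Continuous fun c : ℝ => phi N y - 2 * c).tendsto 0
      simp only [mul_zero, sub_zero] at this
      exact this.mono_left nhdsWithin_le_nhds
    refine tendsto_of_tendsto_of_tendsto_of_le_of_le' h1 tendsto_const_nhds ?_ ?_
    · filter_upwards [self_mem_nhdsWithin] with c hc using thc_ge hc _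
    · filter_upwards [self_mem_nhdsWithin] with c hc using thc_le hc (phi_pos N y).le

lemma grad_bound (N : ℕ) (hN : 5 ≤ N) {r δ : ℝ} (hr : 0 < r) (hδ : 0 < δ)
    (x₀ : EuclideanSpace ℝ (Fin N)) (Ω : Set (EuclideanSpace ℝ (Fin N))) (hΩ : IsOpen Ω)
    (a : EuclideanSpace ℝ (Fin N) → ℝ) (γ α : ℝ) (hγ : 0 ≤ γ) (hα : 0 ≤ α)
    (ha0 : ∀ x ∈ Ω, 0 ≤ a x)
    (ha : ∀ x ∈ Metric.closedBall x₀ r, a x ≤ γ + α * ‖x - x₀‖ ^ 2) :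
    ∫ x in Ω, a x * ‖fderiv ℝ (Wf N ((1 + (r / δ) ^ 2) ^ (-(((N : ℝ) - 2) / 2))) δ x₀) x‖ ^ 2
     ≤ δ ^ N * (δ⁻¹ ^ 2 * (γ * (((N : ℝ) - 2) ^ 2 *
      ∫ y : EuclideanSpace ℝ (Fin N), ‖y‖ ^ 2 * (1 + ‖y‖ ^ 2) ^ (-(N : ℝ))) +
      α * δ ^ 2 * (((N : ℝ) - 2) ^ 2 *
      ∫ y : EuclideanSpace ℝ (Fin N), (‖y‖ ^ 2) ^ 2 * (1 + ‖y‖ ^ 2) ^ (-(N : ℝ))))) := by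
  have hN' : (5:ℝ) ≤ N := by exact_mod_cast hN
  set c := (1 + (r / δ) ^ 2) ^ (-(((N : ℝ) - 2) / 2)) with hcdef
  have hc : 0 < c := by positivity
  have i1 : Integrable (fun y : EuclideanSpace ℝ (Fin N) =>
      ‖y‖ ^ 2 * (1 + ‖y‖ ^ 2) ^ (-(N : ℝ))) := by
    simpa using intE_mul (N := N) (s := N) 1 (by push_cast; linarith)
  have i2 : Integrable (fun y : EuclideanSpace ℝ (Fin N) =>
      (‖y‖ ^ 2) ^ 2 * (1 + ‖y‖ ^ 2) ^ (-(N : ℝ))) :=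
    intE_mul (N := N) (s := N) 2 (by push_cast; linarith)
  let g : EuclideanSpace ℝ (Fin N) → ℝ := fun y =>
    δ⁻¹ ^ 2 * (γ * (((N : ℝ) - 2) ^ 2 * (‖y‖ ^ 2 * (1 + ‖y‖ ^ 2) ^ (-(N : ℝ)))) +
      α * δ ^ 2 * (((N : ℝ) - 2) ^ 2 * ((‖y‖ ^ 2) ^ 2 * (1 + ‖y‖ ^ 2) ^ (-(N : ℝ)))))
  have j1 := ((i1.const_mul (((N : ℝ) - 2) ^ 2)).const_mul γ)
  have j2 := ((i2.const_mul (((N : ℝ) - 2) ^ 2)).const_mul (α * δ ^ 2))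
  have hg : Integrable g := (j1.add j2).const_mul _
  have hgn : ∀ y, 0 ≤ g y := fun y => by positivity
  have hgi : ∫ y, g y = δ⁻¹ ^ 2 * (γ * (((N : ℝ) - 2) ^ 2 *
      ∫ y : EuclideanSpace ℝ (Fin N), ‖y‖ ^ 2 * (1 + ‖y‖ ^ 2) ^ (-(N : ℝ))) +
      α * δ ^ 2 * (((N : ℝ) - 2) ^ 2 *
      ∫ y : EuclideanSpace ℝ (Fin N), (‖y‖ ^ 2) ^ 2 * (1 + ‖y‖ ^ 2) ^ (-(N : ℝ)))) := by
    simp only [g]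
    rw [integral_const_mul, integral_add j1 j2]
    simp only [integral_const_mul]
  rw [← hgi, ← chvar N g hδ x₀]
  have hgx := chvar_int N hg hδ x₀
  refine le_trans ?_ (setIntegral_le_integral (s := Ω) hgx (ae_of_all _ fun x => hgn _))
  refine integral_mono_of_nonneg ?_ hgx.integrableOn ?_
  · filter_upwards [ae_restrict_mem hΩ.measurableSet] with x hx
    exact mul_nonneg (ha0 x hx) (by positivity)
  · filter_upwards [ae_restrict_mem hΩ.measurableSet] with x hx
    by_cases hxb : x ∈ Metric.closedBall x₀ r
    · have h1 := Wf_fderiv N hN hc hδ x₀ x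
      have h2 := ha x hxb
      calc a x * ‖fderiv ℝ (Wf N c δ x₀) x‖ ^ 2
          ≤ (γ + α * ‖x - x₀‖ ^ 2) * _ := mul_le_mul h2 h1 (by positivity) (by positivity)
        _ = g (δ⁻¹ • (x - x₀)) := by
          have h3 : ‖x - x₀‖ = δ * ‖δ⁻¹ • (x - x₀)‖ := by
            rw [norm_smul, norm_of_nonneg (by positivity)]; field_simp
          rw [h3]
          simp only [g]
          ring
    · have h1 : fderiv ℝ (Wf N c δ x₀) x = 0 := by
        by_contra h
        exact hxb (Wf_supp N hN hr hδ x₀ (support_fderiv_subset ℝ h))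
      rw [h1]; simpa using hgn _

lemma c_small (N : ℕ) (hN : 5 ≤ N) {r η : ℝ} (hr : 0 < r) (hη : 0 < η) :
    ∀ᶠ δ in 𝓝[>] (0:ℝ), (1 + (r / δ) ^ 2) ^ (-(((N : ℝ) - 2) / 2)) < η * δ ^ 2 := by
  have hN' : (5:ℝ) ≤ N := by exact_mod_cast hN
  have h1 : ∀ᶠ δ in 𝓝[>] (0:ℝ), δ < min r (η * r ^ 3) :=
    (eventually_lt_nhds (by positivity)).filter_mono nhdsWithin_le_nhds
  filter_upwards [h1, self_mem_nhdsWithin] with δ hδ1 hδ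
  have hδ : 0 < δ := hδ
  have hδr : δ < r := hδ1.trans_le (min_le_left _ _)
  have hδe : δ < η * r ^ 3 := hδ1.trans_le (min_le_right _ _)
  have hR : 1 ≤ r / δ := by rw [le_div_iff₀ hδ]; linarith
  calc (1 + (r / δ) ^ 2) ^ (-(((N : ℝ) - 2) / 2)) ≤ ((r / δ) ^ 2) ^ (-(((N : ℝ) - 2) / 2)) :=
        rpow_le_rpow_of_nonpos (by positivity) (by linarith) (by linarith)
    _ = (r / δ) ^ (-((N : ℝ) - 2)) := by
        rw [← rpow_two, ← rpow_mul (by positivity)]; congr 1; ring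
    _ ≤ (r / δ) ^ (-(3:ℝ)) := rpow_le_rpow_of_exponent_le hR (by linarith)
    _ = (δ / r) ^ 3 := by
        rw [rpow_neg (by positivity)]
        rw [show (3:ℝ) = ((3:ℕ):ℝ) by norm_num, rpow_natCast, ← inv_pow, inv_div]
    _ = δ / r ^ 3 * δ ^ 2 := by field_simp
    _ < η * δ ^ 2 := by
        have : δ / r ^ 3 < η := by rw [div_lt_iff₀ (by positivity)]; exact hδe
        gcongr

lemma quad_a {N : ℕ} (a : EuclideanSpace ℝ (Fin N) → ℝ) (x₀ : EuclideanSpace ℝ (Fin N)) (A ε : ℝ)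
    (hε : 0 < ε)
    (h : Tendsto (fun x => (a x - a x₀ - A * ‖x - x₀‖ ^ (2:ℝ)) / ‖x - x₀‖ ^ (2:ℝ))
      (𝓝[≠] x₀) (𝓝 0)) :
    ∀ᶠ x in 𝓝 x₀, a x ≤ a x₀ + (A + ε) * ‖x - x₀‖ ^ 2 := by
  have h1 := h.eventually (eventually_lt_nhds hε)
  rw [eventually_nhdsWithin_iff] at h1
  filter_upwards [h1] with x hx
  by_cases hxx : x = x₀
  · subst hxx; simp
  · have h2 := hx hxx
    have h3 : 0 < ‖x - x₀‖ := norm_pos_iff.mpr (sub_ne_zero.mpr hxx)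
    rw [rpow_two, div_lt_iff₀ (by positivity)] at h2
    linarith

lemma quad_b {N : ℕ} (b : EuclideanSpace ℝ (Fin N) → ℝ) (x₀ : EuclideanSpace ℝ (Fin N))
    (B l ε : ℝ) (hB : 0 < B) (hl : 2 < l)
    (hε : 0 < ε)
    (h : Tendsto (fun x => (b x - b x₀ - B * ‖x - x₀‖ ^ l) / ‖x - x₀‖ ^ l)
      (𝓝[≠] x₀) (𝓝 0)) :
    ∀ᶠ x in 𝓝 x₀, b x ≤ b x₀ + ε * ‖x - x₀‖ ^ 2 := by
  have h1 := h.eventually (eventually_lt_nhds one_pos)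
  rw [eventually_nhdsWithin_iff] at h1
  have h4 : Tendsto (fun x : EuclideanSpace ℝ (Fin N) => (B + 1) * ‖x - x₀‖ ^ (l - 2))
      (𝓝 x₀) (𝓝 0) := by
    have hc : Continuous (fun x : EuclideanSpace ℝ (Fin N) => (B + 1) * ‖x - x₀‖ ^ (l - 2)) :=
      continuous_const.mul (Continuous.rpow_const (by fun_prop) fun _ => Or.inr (by linarith))
    have := hc.tendsto x₀
    simpa [zero_rpow (show l - 2 ≠ 0 by linarith)] using this
  filter_upwards [h1, h4.eventually (eventually_lt_nhds hε)] with x hx hx4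
  by_cases hxx : x = x₀
  · subst hxx; simp
  · have h2 := hx hxx
    have h3 : 0 < ‖x - x₀‖ := norm_pos_iff.mpr (sub_ne_zero.mpr hxx)
    rw [div_lt_iff₀ (by positivity)] at h2
    have e : ‖x - x₀‖ ^ l = ‖x - x₀‖ ^ (l - 2) * ‖x - x₀‖ ^ 2 := by
      rw [← rpow_natCast, ← rpow_add h3]; congr 1; push_cast; ring
    have h5 := mul_le_mul_of_nonneg_right hx4.le (sq_nonneg ‖x - x₀‖)
    rw [mul_assoc, ← e] at h5
    linarith

lemma integral_pos' (N : ℕ) {s : ℝ} (hs : (N : ℝ) < 2 * s) :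
    0 < ∫ y : EuclideanSpace ℝ (Fin N), (1 + ‖y‖ ^ 2) ^ (-s) := by
  rw [integral_pos_iff_support_of_nonneg (fun y => by positivity) (intE hs)]
  have : Function.support (fun y : EuclideanSpace ℝ (Fin N) => (1 + ‖y‖ ^ 2) ^ (-s)) = Set.univ := by
    ext y
    simp only [Function.mem_support, Set.mem_univ, iff_true]
    positivity
  rw [this]
  exact isOpen_univ.measure_pos _ Set.univ_nonempty

set_option maxHeartbeats 2000000 in
theorem stmt_5
    (N : ℕ) (hN : 5 ≤ N)
    (Ω : Set (EuclideanSpace ℝ (Fin N)))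
    (hΩo : IsOpen Ω) (hΩb : Bornology.IsBounded Ω) (hΩne : Ω.Nonempty)
    (x₀ : EuclideanSpace ℝ (Fin N)) (hx₀ : x₀ ∈ Ω)
    (a b : EuclideanSpace ℝ (Fin N) → ℝ)
    (ha : Continuous a) (hb : Continuous b)
    (hapos : ∀ x ∈ closure Ω, 0 < a x) (hbpos : ∀ x ∈ closure Ω, 0 < b x)
    (γ₀ : ℝ) (haγ : a x₀ = γ₀) (hbγ : b x₀ = γ₀)
    (hamin : ∀ x ∈ closure Ω, γ₀ ≤ a x) (hbmin : ∀ x ∈ closure Ω, γ₀ ≤ b x)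
    (k l A B : ℝ) (hA : 0 < A) (hB : 0 < B)
    (hk : k = 2) (hl : 2 < l)
    (hexpa : Tendsto (fun x => (a x - a x₀ - A * ‖x - x₀‖ ^ k) / ‖x - x₀‖ ^ k)
      (𝓝[≠] x₀) (𝓝 0))
    (hexpb : Tendsto (fun x => (b x - b x₀ - B * ‖x - x₀‖ ^ l) / ‖x - x₀‖ ^ l)
      (𝓝[≠] x₀) (𝓝 0))
    (q : ℝ) (hq : q = 2 * (N : ℝ) / ((N : ℝ) - 2))
    (K₁ K₂ S : ℝ)
    (hK₁ : K₁ = ((N : ℝ) - 2) ^ 2 *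
      ∫ y : EuclideanSpace ℝ (Fin N), ‖y‖ ^ 2 * (1 + ‖y‖ ^ 2) ^ (-(N : ℝ)))
    (hK₂ : K₂ = (∫ y : EuclideanSpace ℝ (Fin N), (1 + ‖y‖ ^ 2) ^ (-(N : ℝ)))
      ^ (((N : ℝ) - 2) / (N : ℝ)))
    (hS : S = K₁ / K₂)
    (lam : ℝ) (hlam : (N : ℝ) * ((N : ℝ) - 2) * ((N : ℝ) + 2) / (8 * ((N : ℝ) - 1)) * A < lam) :
    ∃ u v : EuclideanSpace ℝ (Fin N) → ℝ,
      ContDiff ℝ (⊤ : ℕ∞) u ∧ HasCompactSupport u ∧ tsupport u ⊆ Ω ∧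
      ContDiff ℝ (⊤ : ℕ∞) v ∧ HasCompactSupport v ∧ tsupport v ⊆ Ω ∧
      (∫ x in Ω, |u x| ^ q) ^ (1 / q) = 1 ∧
      (∫ x in Ω, |v x| ^ q) ^ (1 / q) = 1 ∧
      (1 / 2) * (∫ x in Ω, a x * ‖fderiv ℝ u x‖ ^ 2)
        + (1 / 2) * (∫ x in Ω, b x * ‖fderiv ℝ v x‖ ^ 2)
        - lam * ∫ x in Ω, u x * v x
      < γ₀ * S := by
  subst hk
  have hN' : (5:ℝ) ≤ N := by exact_mod_cast hN
  have hγ : 0 < γ₀ := haγ ▸ hapos x₀ (subset_closure hx₀)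
  have hq0 : 0 < q := by rw [hq]; exact div_pos (by linarith) (by linarith)
  set Q0 := ∫ y : EuclideanSpace ℝ (Fin N), (1 + ‖y‖ ^ 2) ^ (-(N : ℝ)) with hQ0
  set P := ∫ y : EuclideanSpace ℝ (Fin N), (1 + ‖y‖ ^ 2) ^ (-(((N : ℝ) + 2) / 2)) with hP
  set I := ∫ y : EuclideanSpace ℝ (Fin N), (1 + ‖y‖ ^ 2) ^ (-((N : ℝ) - 2)) with hI
  set J := ∫ y : EuclideanSpace ℝ (Fin N), (‖y‖ ^ 2) ^ 2 * (1 + ‖y‖ ^ 2) ^ (-(N : ℝ)) with hJ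
  have hQ0p : 0 < Q0 := integral_pos' N (by linarith)
  have hPp : 0 < P := integral_pos' N (by linarith)
  have hIp : 0 < I := integral_pos' N (by linarith)
  have hJp : 0 ≤ J := integral_nonneg fun y => by positivity
  have hK1p : 0 ≤ K₁ := by
    rw [hK₁]; exact mul_nonneg (by positivity) (integral_nonneg fun y => by positivity)
  have hK2p : 0 < K₂ := by rw [hK₂]; positivity
  have hrat := ratio N hN
  rw [← hI, ← hJ] at hrat
  set J' := ((N:ℝ) - 2) ^ 2 * J with hJ'
  have hJ'p : 0 ≤ J' := by positivity
  have hmJ : (N : ℝ) * ((N : ℝ) - 2) * ((N : ℝ) + 2) / (8 * ((N : ℝ) - 1)) * A * I = A / 2 * J' := by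
    have h1 : (N:ℝ) - 1 ≠ 0 := by linarith
    rw [hJ']
    field_simp
    linear_combination 2 * ((N:ℝ) - 2) * hrat
  obtain ⟨κ, hκ⟩ : ∃ κ, κ = lam * I - A / 2 * J' := ⟨_, rfl⟩
  have hκp : 0 < κ := by
    rw [hκ, ← hmJ, ← sub_mul]; exact mul_pos (by linarith) hIp
  obtain ⟨ε, hε⟩ : ∃ ε, ε = κ / (4 * (J' + 1)) := ⟨_, rfl⟩
  have hεp : 0 < ε := by rw [hε]; positivity
  have hεJ : ε * J' ≤ κ / 4 := by
    have : ε * (J' + 1) = κ / 4 := by rw [hε]; field_simp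
    linarith
  have hlamp : 0 < lam := by
    refine lt_of_le_of_lt ?_ hlam
    refine mul_nonneg (div_nonneg ?_ (by linarith)) hA.le
    exact mul_nonneg (mul_nonneg (by linarith) (by linarith)) (by linarith)
  -- radius
  obtain ⟨r, hr, hball⟩ : ∃ r > 0, ∀ x ∈ Metric.closedBall x₀ r, x ∈ Ω ∧
      a x ≤ γ₀ + (A + ε) * ‖x - x₀‖ ^ 2 ∧ b x ≤ γ₀ + ε * ‖x - x₀‖ ^ 2 := by
    have h1 := quad_a a x₀ A ε hεp hexpa
    have h2 := quad_b b x₀ B l ε hB hl hεp hexpb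
    rw [haγ] at h1
    rw [hbγ] at h2
    have h3 := (hΩo.eventually_mem hx₀).and (h1.and h2)
    exact Metric.nhds_basis_closedBall.eventually_iff.mp h3
  -- the scale
  set cc : ℝ → ℝ := fun δ => (1 + (r / δ) ^ 2) ^ (-(((N : ℝ) - 2) / 2)) with hcc
  have hccp : ∀ δ, 0 < cc δ := fun δ => by simp only [hcc]; positivity
  have hct : Tendsto cc (𝓝[>] 0) (𝓝[>] 0) := by
    refine tendsto_nhdsWithin_iff.mpr ⟨?_, Eventually.of_forall hccp⟩
    have h0 : Tendsto (fun δ : ℝ => 1 * δ ^ 2) (𝓝[>] 0) (𝓝 0) := by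
      have := (by fun_prop : Continuous fun δ : ℝ => 1 * δ ^ 2).tendsto 0
      simp only [ne_eq, OfNat.ofNat_ne_zero, not_false_eq_true, zero_pow, mul_zero] at this
      exact this.mono_left nhdsWithin_le_nhds
    refine squeeze_zero' (Eventually.of_forall fun δ => (hccp δ).le) ?_ h0
    exact (c_small N hN hr one_pos).mono fun δ h => h.le
  obtain ⟨D, hD⟩ : ∃ D, D = γ₀ * K₁ * (2 * q * P / Q0) := ⟨_, rfl⟩
  have hDp : 0 ≤ D := by rw [hD]; positivity
  have ev1 := c_small N hN hr (η := κ / (2 * (D + 1))) (by positivity)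
  have ev2 : ∀ᶠ δ in 𝓝[>] (0:ℝ), cc δ < Q0 / (2 * q * P) :=
    (tendsto_nhdsWithin_iff.mp hct).1.eventually (eventually_lt_nhds (by positivity))
  have ev3 : ∀ᶠ δ in 𝓝[>] (0:ℝ), lam * I - κ / 4 <
      lam * ∫ y : EuclideanSpace ℝ (Fin N), thc (cc δ) (phi N y) ^ 2 :=
    (((sq_lim N hN).comp hct).const_mul lam).eventually (eventually_gt_nhds (by linarith))
  obtain ⟨δ, e1, e2, e3, hδ⟩ := (ev1.and (ev2.and (ev3.and self_mem_nhdsWithin))).exists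
  have hδ : 0 < δ := hδ
  have hGa := grad_bound N hN hr hδ x₀ Ω hΩo a γ₀ (A + ε) hγ.le (by positivity)
    (fun x hx => (hapos x (subset_closure hx)).le) (fun x hx => (hball x hx).2.1)
  have hGb := grad_bound N hN hr hδ x₀ Ω hΩo b γ₀ ε hγ.le (by positivity)
    (fun x hx => (hbpos x (subset_closure hx)).le) (fun x hx => (hball x hx).2.2)
  rw [← hK₁, ← hJ, ← hJ'] at hGa hGb
  have hsupp := Wf_supp N hN hr hδ x₀
  change (1 + (r / δ) ^ 2) ^ (-(((N : ℝ) - 2) / 2)) < _ at e1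
  have hc0 := hccp δ
  simp only [hcc] at e2 e3 hc0
  set c := (1 + (r / δ) ^ 2) ^ (-(((N : ℝ) - 2) / 2)) with hc
  set W := Wf N c δ x₀ with hW
  have hsuppΩ : tsupport W ⊆ Ω := fun x hx => (hball x (hsupp hx)).1
  have hW0 : ∀ x ∉ Ω, W x = 0 := fun x hx => by
    by_contra h
    exact hx (hsuppΩ (subset_tsupport _ h))
  have hcomp : HasCompactSupport W :=
    (isCompact_closedBall x₀ r).of_isClosed_subset (isClosed_tsupport _) hsupp
  have hWs : ContDiff ℝ (⊤ : ℕ∞) W := Wf_contDiff N c δ x₀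
  have hsq : ∫ x in Ω, W x * W x = δ ^ N * ∫ y : EuclideanSpace ℝ (Fin N), thc c (phi N y) ^ 2 := by
    rw [setIntegral_eq_integral_of_forall_compl_eq_zero (fun x hx => by simp [hW0 x hx]),
      ← chvar N _ hδ x₀]
    simp only [hW, Wf, sq]
  set Tq := ∫ y : EuclideanSpace ℝ (Fin N), |thc c (phi N y)| ^ q with hTq
  have hT : ∫ x in Ω, |W x| ^ q = δ ^ N * Tq := by
    rw [setIntegral_eq_integral_of_forall_compl_eq_zero
      (fun x hx => by simp [hW0 x hx, zero_rpow hq0.ne']), hTq,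
      ← chvar N _ hδ x₀]
    simp only [hW, Wf]
  have hTl := Q_lower N hN hc0 q hq
  rw [← hQ0, ← hP, ← hTq] at hTl
  obtain ⟨ρ, hρ⟩ : ∃ ρ, ρ = 2 * q * P / Q0 * c := ⟨_, rfl⟩
  have hρ1 : ρ < 1 := by
    rw [lt_div_iff₀ (by positivity)] at e2
    rw [hρ, div_mul_eq_mul_div, div_lt_one hQ0p]; linarith
  have hρ0 : 0 ≤ ρ := by rw [hρ]; positivity
  have hTl' : Q0 * (1 - ρ) ≤ Tq := by
    refine le_trans (le_of_eq ?_) hTl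
    rw [hρ]; field_simp
  have hTqp : 0 < Tq := lt_of_lt_of_le (mul_pos hQ0p (by linarith)) hTl'
  have hqe : 2 / q = ((N:ℝ) - 2) / N := by
    have : (N:ℝ) - 2 ≠ 0 := by linarith
    rw [hq]; field_simp
  have hTq2 : K₂ * (1 - ρ) ≤ Tq ^ (2 / q) := by
    rw [hqe, hK₂]
    refine le_trans ?_ (rpow_le_rpow (mul_nonneg hQ0p.le (by linarith)) hTl'
      (div_nonneg (by linarith) (by linarith)))
    rw [mul_rpow hQ0p.le (by linarith)]
    refine mul_le_mul_of_nonneg_left ?_ (by positivity)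
    refine self_le_rpow_of_le_one (by linarith) (by linarith) ?_
    rw [div_le_one (by linarith)]; linarith
  have hδN : (δ ^ N) ^ (2 / q) = δ ^ N * δ⁻¹ ^ 2 := by
    have hN0 : (N:ℝ) ≠ 0 := by linarith
    rw [hqe, ← rpow_natCast δ N, ← rpow_mul hδ.le, mul_div_cancel₀ _ hN0, rpow_sub hδ, rpow_two]
    field_simp
  obtain ⟨T, hTdef⟩ : ∃ T, T = δ ^ N * Tq := ⟨_, rfl⟩
  have hTp : 0 < T := by rw [hTdef]; positivity
  rw [← hTdef] at hT
  have hT2 : T ^ (2 / q) = δ ^ N * δ⁻¹ ^ 2 * Tq ^ (2 / q) := by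
    rw [hTdef, mul_rpow (by positivity) hTqp.le, hδN]
  obtain ⟨C, hC⟩ : ∃ C, C = T ^ (-(1 / q)) := ⟨_, rfl⟩
  have hCp : 0 < C := by rw [hC]; positivity
  have hC2 : C ^ 2 = (T ^ (2 / q))⁻¹ := by
    rw [hC, ← rpow_natCast, ← rpow_mul hTp.le, ← rpow_neg hTp.le]; congr 1; push_cast; ring
  have hnorm : (∫ x in Ω, |C * W x| ^ q) ^ (1 / q) = 1 := by
    have h1 : ∀ x, |C * W x| ^ q = C ^ q * |W x| ^ q := fun x => by
      rw [abs_mul, abs_of_pos hCp, mul_rpow hCp.le (abs_nonneg _)]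
    simp only [h1]
    rw [integral_const_mul, hT, hC, ← rpow_mul hTp.le,
      show -(1 / q) * q = -1 by field_simp, rpow_neg_one, inv_mul_cancel₀ hTp.ne', one_rpow]
  have hfd : ∀ x, ‖fderiv ℝ (fun x => C * W x) x‖ ^ 2 = C ^ 2 * ‖fderiv ℝ W x‖ ^ 2 := fun x => by
    have hd : DifferentiableAt ℝ W x := hWs.differentiable (by simp) x
    rw [fderiv_const_mul hd, norm_smul, mul_pow, norm_of_nonneg hCp.le]
  have hus : ContDiff ℝ (⊤ : ℕ∞) (fun x => C * W x) := contDiff_const.mul hWs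
  have huc : HasCompactSupport (fun x => C * W x) := hcomp.mul_left
  have hut : tsupport (fun x => C * W x) ⊆ Ω :=
    (tsupport_mul_subset_right (f := fun _ => C) (g := W)).trans hsuppΩ
  refine ⟨fun x => C * W x, fun x => C * W x, hus, huc, hut, hus, huc, hut, hnorm, hnorm, ?_⟩
  simp only [hfd]
  have r1 : ∀ x, a x * (C ^ 2 * ‖fderiv ℝ W x‖ ^ 2) = C ^ 2 * (a x * ‖fderiv ℝ W x‖ ^ 2) :=
    fun x => by ring
  have r2 : ∀ x, b x * (C ^ 2 * ‖fderiv ℝ W x‖ ^ 2) = C ^ 2 * (b x * ‖fderiv ℝ W x‖ ^ 2) :=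
    fun x => by ring
  have r3 : ∀ x, C * W x * (C * W x) = C ^ 2 * (W x * W x) := fun x => by ring
  simp only [r1, r2, r3, integral_const_mul]
  rw [hsq]
  generalize (∫ x in Ω, a x * ‖fderiv ℝ W x‖ ^ 2) = GA at *
  generalize (∫ x in Ω, b x * ‖fderiv ℝ W x‖ ^ 2) = GB at *
  generalize (∫ y : EuclideanSpace ℝ (Fin N), thc c (phi N y) ^ 2) = Z at *
  clear hJ' hJ hI hP hQ0 hsq hT hTq hW hc hcc
  clear_value W Tq c J' J I P Q0
  obtain ⟨d, hd⟩ : ∃ d, d = δ ^ N * δ⁻¹ ^ 2 := ⟨_, rfl⟩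
  have hdp : 0 < d := by rw [hd]; positivity
  have hdN : δ ^ N = d * δ ^ 2 := by rw [hd]; field_simp
  rw [← mul_assoc, ← hd] at hGa hGb
  rw [← hd] at hT2
  rw [hdN]
  have hnum : 1 / 2 * GA + 1 / 2 * GB - lam * (d * δ ^ 2 * Z)
      ≤ d * (γ₀ * K₁ - δ ^ 2 * (κ / 2)) := by
    have h1 : d * δ ^ 2 * (lam * I - κ / 4) ≤ d * δ ^ 2 * (lam * Z) :=
      mul_le_mul_of_nonneg_left e3.le (by positivity)
    have h2 : d * δ ^ 2 * (ε * J') ≤ d * δ ^ 2 * (κ / 4) :=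
      mul_le_mul_of_nonneg_left hεJ (by positivity)
    have h3 : d * δ ^ 2 * κ = d * δ ^ 2 * (lam * I - A / 2 * J') := by rw [hκ]
    linarith
  have hstrict : γ₀ * K₁ * ρ < δ ^ 2 * (κ / 2) := by
    have h1 : γ₀ * K₁ * ρ = D * c := by rw [hρ, hD]; ring
    rw [h1]
    calc D * c ≤ (D + 1) * c := by nlinarith
      _ < (D + 1) * (κ / (2 * (D + 1)) * δ ^ 2) := by gcongr
      _ = _ := by field_simp
  have hSb : d * (γ₀ * K₁ * (1 - ρ)) ≤ γ₀ * S * T ^ (2 / q) := by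
    rw [hT2, hS]
    calc d * (γ₀ * K₁ * (1 - ρ)) = γ₀ * (K₁ / K₂) * (d * (K₂ * (1 - ρ))) := by field_simp
      _ ≤ _ := by gcongr
  have hfin : 1 / 2 * GA + 1 / 2 * GB - lam * (d * δ ^ 2 * Z) < γ₀ * S * T ^ (2 / q) := by
    refine lt_of_le_of_lt hnum (lt_of_lt_of_le ?_ hSb)
    refine mul_lt_mul_of_pos_left ?_ hdp
    linarith
  have hT2p : 0 < T ^ (2 / q) := by positivity
  calc _ = (T ^ (2 / q))⁻¹ * (1 / 2 * GA + 1 / 2 * GB - lam * (d * δ ^ 2 * Z)) := by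
        rw [hC2]; ring
    _ < (T ^ (2 / q))⁻¹ * (γ₀ * S * T ^ (2 / q)) := by gcongr
    _ = γ₀ * S := by field_simp
end
end

section
/- Let N = 4, Ω ⊂ ℝ^4 a nonempty bounded open set, x₀ ∈ Ω, and a, b : ℝ^4 → ℝ continuous functions positive on the closure of Ω with a(x₀) = b(x₀) = γ₀ and γ₀ = min_{x∈Ω̄} a(x) = min_{x∈Ω̄} b(x). Suppose a admits the expansion of order k at x₀ with coefficient A_k > 0 and b admits the expansion of order l at x₀ with coefficient B_l > 0, where k = 2 and l > 2. Then for every λ > A₂ there exist smooth functions u, v compactly supported in Ω with ‖u‖_{L^q(Ω)} = ‖v‖_{L^q(Ω)} = 1 such that F_λ(u,v) < γ₀ S. -/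
open MeasureTheory Real Filter Topology

noncomputable section

abbrev E4 := EuclideanSpace ℝ (Fin 4)

def Uf (x₀ : E4) (ε : ℝ) (x : E4) : ℝ := ε / (ε ^ 2 + ‖x - x₀‖ ^ 2)

def wf {x₀ : E4} (φ : ContDiffBump x₀) (ε : ℝ) (x : E4) : ℝ := φ x * Uf x₀ ε x

def ann (x₀ : E4) (r δ : ℝ) : Set E4 := {x | ‖x - x₀‖ ∈ Set.Ioc δ r}

def Lf (x₀ : E4) (r δ : ℝ) : ℝ := ∫ x in ann x₀ r δ, (‖x - x₀‖ ^ 4)⁻¹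

lemma ann_meas (x₀ : E4) (r δ : ℝ) : MeasurableSet (ann x₀ r δ) := by
  have h : Measurable (fun x : E4 => ‖x - x₀‖) := by fun_prop
  exact h measurableSet_Ioc

lemma ann_integrable (x₀ : E4) (r δ : ℝ) (hδ : 0 < δ) :
    IntegrableOn (fun x => (‖x - x₀‖ ^ 4)⁻¹) (ann x₀ r δ) := by
  refine Measure.integrableOn_of_bounded (M := (δ ^ 4)⁻¹) ?_ ?_ ?_
  · have : ann x₀ r δ ⊆ Metric.closedBall x₀ r := by
      intro x hx
      rw [mem_closedBall_iff_norm]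
      exact hx.2
    exact (lt_of_le_of_lt (measure_mono this) measure_closedBall_lt_top).ne
  · exact (by fun_prop : Measurable (fun x : E4 => (‖x - x₀‖ ^ 4)⁻¹)).aestronglyMeasurable
  · refine (ae_restrict_iff' (ann_meas _ _ _)).2 (Eventually.of_forall fun x hx => ?_)
    rw [Real.norm_of_nonneg (by positivity)]
    have := hx.1
    gcongr

lemma Lf_eq (x₀ : E4) (r δ : ℝ) (hδ : 0 < δ) (hr : δ ≤ r) :
    Lf x₀ r δ = 4 * ((volume : Measure E4).real (Metric.ball 0 1) * Real.log (r / δ)) := by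
  unfold Lf
  rw [← integral_indicator (ann_meas _ _ _)]
  have h1 : ∀ x : E4, (ann x₀ r δ).indicator (fun x => (‖x - x₀‖ ^ 4)⁻¹) x
      = (Set.Ioc δ r).indicator (fun s : ℝ => (s ^ 4)⁻¹) ‖x - x₀‖ := by
    intro x
    by_cases hx : ‖x - x₀‖ ∈ Set.Ioc δ r
    · rw [Set.indicator_of_mem hx, Set.indicator_of_mem (show x ∈ ann x₀ r δ from hx)]
    · rw [Set.indicator_of_notMem hx, Set.indicator_of_notMem (show x ∉ ann x₀ r δ from hx)]
  simp_rw [h1]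
  rw [integral_sub_right_eq_self (fun x : E4 => (Set.Ioc δ r).indicator (fun s : ℝ => (s ^ 4)⁻¹) ‖x‖) x₀]
  rw [integral_fun_norm_addHaar volume ((Set.Ioc δ r).indicator (fun s : ℝ => (s ^ 4)⁻¹))]
  simp only [finrank_euclideanSpace, Fintype.card_fin, smul_eq_mul, nsmul_eq_mul]
  have h2 : ∫ (y : ℝ) in Set.Ioi 0, y ^ (4 - 1) * (Set.Ioc δ r).indicator (fun s : ℝ => (s ^ 4)⁻¹) y
      = Real.log (r / δ) := by
    have h3 : ∀ y : ℝ, y ^ (4 - 1) * (Set.Ioc δ r).indicator (fun s : ℝ => (s ^ 4)⁻¹) y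
        = (Set.Ioc δ r).indicator (fun s : ℝ => s⁻¹) y := by
      intro y
      by_cases hy : y ∈ Set.Ioc δ r
      · rw [Set.indicator_of_mem hy, Set.indicator_of_mem hy]
        have : 0 < y := hδ.trans hy.1
        field_simp
      · simp [hy]
    simp_rw [h3]
    rw [setIntegral_indicator measurableSet_Ioc]
    have hi : Set.Ioi (0:ℝ) ∩ Set.Ioc δ r = Set.Ioc δ r :=
      Set.inter_eq_right.2 (fun y hy => hδ.trans hy.1)
    rw [hi, ← intervalIntegral.integral_of_le hr,
      integral_inv]
    rw [Set.uIcc_of_le hr]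
    intro h
    linarith [h.1]
  rw [h2]
  norm_num

lemma Lf_large (x₀ : E4) (r : ℝ) (hr : 0 < r) (M : ℝ) :
    ∀ᶠ δ in 𝓝[>] (0:ℝ), M ≤ Lf x₀ r δ := by
  have hω : 0 < (volume : Measure E4).real (Metric.ball 0 1) :=
    ENNReal.toReal_pos (Metric.measure_ball_pos _ _ one_pos).ne' measure_ball_lt_top.ne
  have h1 : Tendsto (fun δ : ℝ => r / δ) (𝓝[>] 0) atTop := by
    simp_rw [div_eq_mul_inv]
    exact tendsto_inv_nhdsGT_zero.const_mul_atTop hr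
  have h2 := Real.tendsto_log_atTop.comp h1
  have h3 := (h2.const_mul_atTop hω).const_mul_atTop (by norm_num : (0:ℝ) < 4)
  filter_upwards [h3.eventually_ge_atTop M, self_mem_nhdsWithin,
    Ioo_mem_nhdsGT hr] with δ h4 h5 h6
  rw [Lf_eq x₀ r δ h5 h6.2.le]
  exact h4

lemma int_D : Integrable (fun y : E4 => ((1 + ‖y‖ ^ 2) ^ 4)⁻¹) := by
  have h := integrable_rpow_neg_one_add_norm_sq (E := E4) (μ := volume) (r := 8) (by simp; norm_num)
  refine h.congr (Eventually.of_forall fun x => ?_)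
  show (1 + ‖x‖ ^ 2) ^ (-8 / 2 : ℝ) = _
  rw [show (-8 / 2 : ℝ) = -((4:ℕ):ℝ) by norm_num, Real.rpow_neg (by positivity), Real.rpow_natCast]

lemma int_K : Integrable (fun y : E4 => ‖y‖ ^ 2 * ((1 + ‖y‖ ^ 2) ^ 4)⁻¹) := by
  have h := integrable_rpow_neg_one_add_norm_sq (E := E4) (μ := volume) (r := 6) (by simp; norm_num)
  refine h.mono' (by fun_prop : Measurable _).aestronglyMeasurable (Eventually.of_forall fun x => ?_)
  rw [Real.norm_of_nonneg (by positivity), show (-6 / 2 : ℝ) = -((3:ℕ):ℝ) by norm_num,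
    Real.rpow_neg (by positivity), Real.rpow_natCast, ← div_eq_mul_inv, ← one_div,
    div_le_div_iff₀ (by positivity) (by positivity)]
  have : 0 ≤ (1 + ‖x‖ ^ 2) ^ 3 := by positivity
  nlinarith [sq_nonneg ‖x‖]

lemma scale_int (x₀ : E4) (f : E4 → ℝ) (hf : Integrable f) (ε : ℝ) (hε : 0 < ε) :
    Integrable (fun x => f (ε⁻¹ • (x - x₀))) ∧
    ∫ x, f (ε⁻¹ • (x - x₀)) = ε ^ 4 * ∫ x, f x := by
  constructor
  · exact (hf.comp_smul (inv_ne_zero hε.ne')).comp_sub_right x₀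
  · rw [integral_sub_right_eq_self (fun x : E4 => f (ε⁻¹ • x)) x₀,
      Measure.integral_comp_inv_smul_of_nonneg volume f hε.le]
    simp

lemma scale_D (x₀ : E4) (ε : ℝ) (hε : 0 < ε) :
    Integrable (fun x => (Uf x₀ ε x) ^ 4) ∧
    ∫ x, (Uf x₀ ε x) ^ 4 = ∫ y : E4, ((1 + ‖y‖ ^ 2) ^ 4)⁻¹ := by
  obtain ⟨h1, h2⟩ := scale_int x₀ _ int_D ε hε
  have h3 : ∀ x, (Uf x₀ ε x) ^ 4 = (ε ^ 4)⁻¹ * ((1 + ‖ε⁻¹ • (x - x₀)‖ ^ 2) ^ 4)⁻¹ := by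
    intro x
    rw [norm_smul, Real.norm_of_nonneg (by positivity)]
    unfold Uf
    have : 0 < ε ^ 2 + ‖x - x₀‖ ^ 2 := by positivity
    field_simp
  simp_rw [h3]
  refine ⟨h1.const_mul _, ?_⟩
  rw [integral_const_mul, h2, ← mul_assoc, inv_mul_cancel₀ (by positivity), one_mul]

lemma scale_K (x₀ : E4) (ε : ℝ) (hε : 0 < ε) :
    Integrable (fun x => 4 * ε ^ 2 * ‖x - x₀‖ ^ 2 / (ε ^ 2 + ‖x - x₀‖ ^ 2) ^ 4) ∧
    ∫ x, 4 * ε ^ 2 * ‖x - x₀‖ ^ 2 / (ε ^ 2 + ‖x - x₀‖ ^ 2) ^ 4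
      = 4 * ∫ y : E4, ‖y‖ ^ 2 * ((1 + ‖y‖ ^ 2) ^ 4)⁻¹ := by
  obtain ⟨h1, h2⟩ := scale_int x₀ _ int_K ε hε
  have h3 : ∀ x : E4, 4 * ε ^ 2 * ‖x - x₀‖ ^ 2 / (ε ^ 2 + ‖x - x₀‖ ^ 2) ^ 4
      = 4 * (ε ^ 4)⁻¹ * (‖ε⁻¹ • (x - x₀)‖ ^ 2 * ((1 + ‖ε⁻¹ • (x - x₀)‖ ^ 2) ^ 4)⁻¹) := by
    intro x
    rw [norm_smul, Real.norm_of_nonneg (by positivity)]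
    have : 0 < ε ^ 2 + ‖x - x₀‖ ^ 2 := by positivity
    field_simp
  simp_rw [h3]
  refine ⟨h1.const_mul _, ?_⟩
  rw [integral_const_mul, h2]
  have : ε ^ 4 ≠ 0 := by positivity
  field_simp

lemma D_pos : 0 < ∫ y : E4, ((1 + ‖y‖ ^ 2) ^ 4)⁻¹ := by
  rw [integral_pos_iff_support_of_nonneg (fun y => by positivity) int_D]
  have : Function.support (fun y : E4 => ((1 + ‖y‖ ^ 2) ^ 4)⁻¹) = Set.univ := by
    ext y
    simp only [Function.mem_support, Set.mem_univ, iff_true]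
    positivity
  rw [this]
  exact Measure.measure_univ_pos.2 (NeZero.ne _)

section W
variable {x₀ : E4} (φ : ContDiffBump x₀)

lemma Uf_contDiff (x₀ : E4) (ε : ℝ) (hε : 0 < ε) : ContDiff ℝ (⊤ : ℕ∞) (Uf x₀ ε) := by
  unfold Uf
  refine contDiff_const.div ?_ (fun x => by positivity)
  exact contDiff_const.add ((contDiff_id.sub contDiff_const).norm_sq ℝ)

lemma wf_contDiff (ε : ℝ) (hε : 0 < ε) : ContDiff ℝ (⊤ : ℕ∞) (wf φ ε) :=
  φ.contDiff.mul (Uf_contDiff x₀ ε hε)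

lemma wf_tsupport (ε : ℝ) : tsupport (wf φ ε) ⊆ Metric.closedBall x₀ φ.rOut := by
  rw [← φ.tsupport_eq]
  exact tsupport_mul_subset_left

lemma wf_compact (ε : ℝ) : HasCompactSupport (wf φ ε) :=
  φ.hasCompactSupport.mul_right

lemma Uf_nonneg (x₀ : E4) (ε : ℝ) (hε : 0 < ε) (x : E4) : 0 ≤ Uf x₀ ε x := by
  unfold Uf; positivity

lemma wf_nonneg (ε : ℝ) (hε : 0 < ε) (x : E4) : 0 ≤ wf φ ε x :=
  mul_nonneg φ.nonneg (Uf_nonneg x₀ ε hε x)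

lemma wf_le (ε : ℝ) (hε : 0 < ε) (x : E4) : wf φ ε x ≤ Uf x₀ ε x :=
  mul_le_of_le_one_left (Uf_nonneg x₀ ε hε x) φ.le_one

lemma wf_eq (ε : ℝ) (x : E4) (hx : ‖x - x₀‖ ≤ φ.rIn) : wf φ ε x = Uf x₀ ε x := by
  unfold wf
  rw [φ.one_of_mem_closedBall (by rw [mem_closedBall_iff_norm]; exact hx), one_mul]

lemma Uf_fderiv (x₀ : E4) (ε : ℝ) (hε : 0 < ε) (x : E4) :
    ‖fderiv ℝ (Uf x₀ ε) x‖ = 2 * ε * ‖x - x₀‖ / (ε ^ 2 + ‖x - x₀‖ ^ 2) ^ 2 := by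
  have h0 : ε ^ 2 + ‖x - x₀‖ ^ 2 ≠ 0 := by positivity
  have h1 : HasFDerivAt (fun y : E4 => ‖y - x₀‖ ^ 2) (2 • innerSL ℝ (x - x₀)) x := by
    have := ((hasFDerivAt_id x).sub_const x₀).norm_sq
    simpa using this
  have h2 := h1.const_add (ε ^ 2)
  have h3 := (hasDerivAt_inv h0).comp_hasFDerivAt x h2
  have h4 := h3.const_mul ε
  have h5 : HasFDerivAt (Uf x₀ ε) _ x := h4
  rw [h5.fderiv, norm_smul, norm_smul, ← Nat.cast_smul_eq_nsmul ℝ, norm_smul, innerSL_apply_norm]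
  simp only [norm_neg, norm_inv, Real.norm_eq_abs, abs_of_pos hε, Nat.cast_ofNat, abs_two]
  rw [abs_of_nonneg (by positivity)]
  field_simp

lemma wf_fderiv_in (ε : ℝ) (hε : 0 < ε) (x : E4) (hx : ‖x - x₀‖ < φ.rIn) :
    ‖fderiv ℝ (wf φ ε) x‖ ^ 2 = 4 * ε ^ 2 * ‖x - x₀‖ ^ 2 / (ε ^ 2 + ‖x - x₀‖ ^ 2) ^ 4 := by
  have h : wf φ ε =ᶠ[𝓝 x] Uf x₀ ε := by
    filter_upwards [φ.eventuallyEq_one_of_mem_ball (by rw [mem_ball_iff_norm]; exact hx)] with y hy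
    simp [wf, hy]
  rw [h.fderiv_eq, Uf_fderiv x₀ ε hε]
  have h0 : ε ^ 2 + ‖x - x₀‖ ^ 2 ≠ 0 := by positivity
  field_simp
  ring

lemma wf_fderiv_out : ∃ C, 0 ≤ C ∧ ∀ ε, 0 < ε → ∀ x : E4, φ.rIn ≤ ‖x - x₀‖ →
    ‖fderiv ℝ (wf φ ε) x‖ ≤ C * ε := by
  have hφ : ContDiff ℝ (⊤ : ℕ∞) φ := φ.contDiff
  obtain ⟨M, hM⟩ := (hφ.continuous_fderiv (by simp)).bounded_above_of_compact_support
    (φ.hasCompactSupport.fderiv (𝕜 := ℝ))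
  have hM0 : 0 ≤ M := (norm_nonneg _).trans (hM x₀)
  have hr := φ.rIn_pos
  set r := φ.rIn with hrdef
  refine ⟨2 / r ^ 3 + M / r ^ 2, by positivity, fun ε hε x hx => ?_⟩
  have hs : 0 < ‖x - x₀‖ := hr.trans_le hx
  set s := ‖x - x₀‖ with hsdef
  have h1 := ((hφ.differentiable (by simp)) x).hasFDerivAt.mul
    (((Uf_contDiff x₀ ε hε).differentiable (by simp)) x).hasFDerivAt
  have h1' : HasFDerivAt (wf φ ε) _ x := h1
  rw [h1'.fderiv]
  refine (norm_add_le _ _).trans ?_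
  rw [norm_smul, norm_smul, Uf_fderiv x₀ ε hε, Real.norm_of_nonneg φ.nonneg,
    Real.norm_of_nonneg (Uf_nonneg x₀ ε hε x)]
  have h2 : 2 * ε * s / (ε ^ 2 + s ^ 2) ^ 2 ≤ 2 / r ^ 3 * ε := by
    calc 2 * ε * s / (ε ^ 2 + s ^ 2) ^ 2 ≤ 2 * ε * s / (s ^ 2) ^ 2 := by
          gcongr; nlinarith [sq_nonneg ε]
      _ = 2 * ε / s ^ 3 := by field_simp
      _ ≤ 2 * ε / r ^ 3 := by gcongr
      _ = _ := by ring
  have h3 : Uf x₀ ε x ≤ ε / r ^ 2 := by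
    unfold Uf
    gcongr
    nlinarith [sq_nonneg ε]
  calc φ x * (2 * ε * s / (ε ^ 2 + s ^ 2) ^ 2) + Uf x₀ ε x * ‖fderiv ℝ φ x‖
      ≤ 1 * (2 / r ^ 3 * ε) + ε / r ^ 2 * M := by
        gcongr
        · exact φ.le_one
        · exact hM x
    _ = _ := by ring

lemma wf_fderiv_zero (ε : ℝ) (x : E4) (hx : φ.rOut < ‖x - x₀‖) :
    fderiv ℝ (wf φ ε) x = 0 := by
  by_contra h
  have h1 := wf_tsupport φ ε (support_fderiv_subset ℝ h)
  rw [mem_closedBall_iff_norm] at h1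
  linarith

lemma sum4 {f1 f2 f3 f4 : E4 → ℝ} (h1 : Integrable f1) (h2 : Integrable f2) (h3 : Integrable f3)
    (h4 : Integrable f4) : Integrable (fun x => f1 x + f2 x + f3 x + f4 x) ∧
    ∫ x, (f1 x + f2 x + f3 x + f4 x) = (∫ x, f1 x) + (∫ x, f2 x) + (∫ x, f3 x) + ∫ x, f4 x := by
  have h12 : Integrable (fun x => f1 x + f2 x) := h1.add h2
  have h123 : Integrable (fun x => f1 x + f2 x + f3 x) := h12.add h3
  refine ⟨h123.add h4, ?_⟩
  rw [integral_add h123 h4, integral_add h12 h3, integral_add h1 h2]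

lemma grad_bound_s6 (a : E4 → ℝ) (γ M amax κ : ℝ) (hγ : 0 ≤ γ) (hM : 0 ≤ M) (hmax : 0 ≤ amax)
    (hκ : 0 < κ)
    (h0 : ∀ x, ‖x - x₀‖ ≤ φ.rOut → 0 ≤ a x)
    (h1 : ∀ x, ‖x - x₀‖ < φ.rIn → a x ≤ γ + M * ‖x - x₀‖ ^ 2)
    (h2 : ∀ x, ‖x - x₀‖ ≤ φ.rOut → a x ≤ amax) :
    ∃ C, 0 ≤ C ∧ ∀ ε, 0 < ε →
      ∫ x, a x * ‖fderiv ℝ (wf φ ε) x‖ ^ 2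
        ≤ γ * (4 * ∫ y : E4, ‖y‖ ^ 2 * ((1 + ‖y‖ ^ 2) ^ 4)⁻¹)
          + 4 * M * ε ^ 2 * Lf x₀ φ.rIn (κ * ε) + C * ε ^ 2 := by
  obtain ⟨C, hC, hC'⟩ := wf_fderiv_out φ
  set ω := (volume : Measure E4).real (Metric.ball 0 1)
  have hω : 0 ≤ ω := measureReal_nonneg
  set V := (volume : Measure E4).real (Metric.closedBall x₀ φ.rOut)
  have hV : 0 ≤ V := measureReal_nonneg
  refine ⟨4 * M * κ ^ 8 * ω + amax * C ^ 2 * V, by positivity, fun ε hε => ?_⟩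
  obtain ⟨hK1, hK2⟩ := scale_K x₀ ε hε
  have hκε : 0 < κ * ε := by positivity
  have i2 : Integrable ((Metric.closedBall x₀ (κ * ε)).indicator
      (fun _ : E4 => 4 * M * ε ^ 2 * (κ ^ 4 * (ε ^ 4)⁻¹))) :=
    (integrable_indicator_iff Metric.isClosed_closedBall.measurableSet).2
      (integrableOn_const measure_closedBall_lt_top.ne)
  have i3 : Integrable ((ann x₀ φ.rIn (κ * ε)).indicator (fun x : E4 => (‖x - x₀‖ ^ 4)⁻¹)) :=
    (integrable_indicator_iff (ann_meas _ _ _)).2 (ann_integrable _ _ _ hκε)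
  have i4 : Integrable ((Metric.closedBall x₀ φ.rOut).indicator
      (fun _ : E4 => amax * (C * ε) ^ 2)) :=
    (integrable_indicator_iff Metric.isClosed_closedBall.measurableSet).2
      (integrableOn_const measure_closedBall_lt_top.ne)
  have key : ∫ x, a x * ‖fderiv ℝ (wf φ ε) x‖ ^ 2 ≤
      ∫ x, (γ * (4 * ε ^ 2 * ‖x - x₀‖ ^ 2 / (ε ^ 2 + ‖x - x₀‖ ^ 2) ^ 4)
        + (Metric.closedBall x₀ (κ * ε)).indicator
      (fun _ : E4 => 4 * M * ε ^ 2 * (κ ^ 4 * (ε ^ 4)⁻¹)) x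
        + 4 * M * ε ^ 2 * (ann x₀ φ.rIn (κ * ε)).indicator (fun x : E4 => (‖x - x₀‖ ^ 4)⁻¹) x
        + (Metric.closedBall x₀ φ.rOut).indicator
      (fun _ : E4 => amax * (C * ε) ^ 2) x) := by
    refine integral_mono_of_nonneg (Eventually.of_forall fun x => ?_)
      (sum4 (hK1.const_mul γ) i2 (i3.const_mul _) i4).1 (Eventually.of_forall fun x => ?_)
    · show 0 ≤ a x * ‖fderiv ℝ (wf φ ε) x‖ ^ 2
      rcases le_or_gt ‖x - x₀‖ φ.rOut with h | h
      · exact mul_nonneg (h0 x h) (by positivity)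
      · rw [wf_fderiv_zero φ ε x h]; simp
    · beta_reduce
      have p1 : 0 ≤ γ * (4 * ε ^ 2 * ‖x - x₀‖ ^ 2 / (ε ^ 2 + ‖x - x₀‖ ^ 2) ^ 4) := by positivity
      have p2 : 0 ≤ (Metric.closedBall x₀ (κ * ε)).indicator
          (fun _ : E4 => 4 * M * ε ^ 2 * (κ ^ 4 * (ε ^ 4)⁻¹)) x :=
        Set.indicator_nonneg (fun _ _ => by positivity) _
      have p3 : 0 ≤ 4 * M * ε ^ 2 *
          (ann x₀ φ.rIn (κ * ε)).indicator (fun x : E4 => (‖x - x₀‖ ^ 4)⁻¹) x :=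
        mul_nonneg (by positivity) (Set.indicator_nonneg (fun _ _ => by positivity) _)
      have p4 : 0 ≤ (Metric.closedBall x₀ φ.rOut).indicator
          (fun _ : E4 => amax * (C * ε) ^ 2) x :=
        Set.indicator_nonneg (fun _ _ => by positivity) _
      rcases lt_or_ge ‖x - x₀‖ φ.rIn with h | h
      · rw [wf_fderiv_in φ ε hε x h]
        have hG : 0 ≤ 4 * ε ^ 2 * ‖x - x₀‖ ^ 2 / (ε ^ 2 + ‖x - x₀‖ ^ 2) ^ 4 := by positivity
        have q1 := mul_le_mul_of_nonneg_right (h1 x h) hG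
        have q2 : M * ‖x - x₀‖ ^ 2 * (4 * ε ^ 2 * ‖x - x₀‖ ^ 2 / (ε ^ 2 + ‖x - x₀‖ ^ 2) ^ 4)
            = 4 * M * ε ^ 2 * (‖x - x₀‖ ^ 4 / (ε ^ 2 + ‖x - x₀‖ ^ 2) ^ 4) := by ring
        rcases le_or_gt ‖x - x₀‖ (κ * ε) with h' | h'
        · rw [Set.indicator_of_mem (s := Metric.closedBall x₀ (κ * ε)) (a := x) (by rw [mem_closedBall_iff_norm]; exact h')]
          have q3 : ‖x - x₀‖ ^ 4 / (ε ^ 2 + ‖x - x₀‖ ^ 2) ^ 4 ≤ κ ^ 4 * (ε ^ 4)⁻¹ := by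
            calc ‖x - x₀‖ ^ 4 / (ε ^ 2 + ‖x - x₀‖ ^ 2) ^ 4 ≤ (κ * ε) ^ 4 / (ε ^ 2) ^ 4 := by
                  gcongr; nlinarith [sq_nonneg ‖x - x₀‖]
              _ = _ := by field_simp
          have q4 := mul_le_mul_of_nonneg_left q3 (by positivity : 0 ≤ 4 * M * ε ^ 2)
          linarith
        · rw [Set.indicator_of_mem (show x ∈ ann x₀ φ.rIn (κ * ε) from ⟨h', h.le⟩)] at p3 ⊢
          have hs : 0 < ‖x - x₀‖ := hκε.trans h'
          have q3 : ‖x - x₀‖ ^ 4 / (ε ^ 2 + ‖x - x₀‖ ^ 2) ^ 4 ≤ (‖x - x₀‖ ^ 4)⁻¹ := by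
            calc ‖x - x₀‖ ^ 4 / (ε ^ 2 + ‖x - x₀‖ ^ 2) ^ 4 ≤ ‖x - x₀‖ ^ 4 / (‖x - x₀‖ ^ 2) ^ 4 := by
                  gcongr; nlinarith [sq_nonneg ε]
              _ = _ := by field_simp
          have q4 := mul_le_mul_of_nonneg_left q3 (by positivity : 0 ≤ 4 * M * ε ^ 2)
          linarith
      · rcases le_or_gt ‖x - x₀‖ φ.rOut with h' | h'
        · rw [Set.indicator_of_mem (s := Metric.closedBall x₀ φ.rOut) (a := x)
            (by rw [mem_closedBall_iff_norm]; exact h')] at p4 ⊢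
          have q1 : a x * ‖fderiv ℝ (wf φ ε) x‖ ^ 2 ≤ amax * (C * ε) ^ 2 := by
            gcongr
            · exact h2 x h'
            · exact hC' ε hε x h
          linarith
        · rw [wf_fderiv_zero φ ε x h']
          simp only [norm_zero]
          linarith
  refine key.trans (le_of_eq ?_)
  rw [(sum4 (hK1.const_mul γ) i2 (i3.const_mul _) i4).2, integral_const_mul, hK2, integral_const_mul,
    integral_indicator (ann_meas _ _ _), integral_indicator_const _ Metric.isClosed_closedBall.measurableSet,
    integral_indicator_const _ Metric.isClosed_closedBall.measurableSet,
    Measure.addHaar_real_closedBall volume x₀ hκε.le]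
  simp only [finrank_euclideanSpace, Fintype.card_fin, smul_eq_mul]
  rw [show ∫ x in ann x₀ φ.rIn (κ * ε), (‖x - x₀‖ ^ 4)⁻¹ = Lf x₀ φ.rIn (κ * ε) from rfl]
  show _ + (κ * ε) ^ 4 * ω * _ + _ + V * _ = _
  field_simp
  ring

lemma wf_int4 (ε : ℝ) (hε : 0 < ε) : Integrable (fun x => wf φ ε x ^ 4) := by
  refine ((wf_contDiff φ ε hε).continuous.pow 4).integrable_of_hasCompactSupport ?_
  rw [show wf φ ε ^ 4 = wf φ ε * wf φ ε ^ 3 by ring]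
  exact (wf_compact φ ε).mul_right

lemma norm_upper (ε : ℝ) (hε : 0 < ε) :
    ∫ x, wf φ ε x ^ 4 ≤ ∫ y : E4, ((1 + ‖y‖ ^ 2) ^ 4)⁻¹ := by
  obtain ⟨h1, h2⟩ := scale_D x₀ ε hε
  rw [← h2]
  refine integral_mono (wf_int4 φ ε hε) h1 fun x => ?_
  exact pow_le_pow_left₀ (wf_nonneg φ ε hε x) (wf_le φ ε hε x) 4

lemma norm_lower : ∃ C, 0 ≤ C ∧ ∀ ε, 0 < ε →
    (∫ y : E4, ((1 + ‖y‖ ^ 2) ^ 4)⁻¹) - C * ε ^ 4 ≤ ∫ x, wf φ ε x ^ 4 := by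
  have hr := φ.rIn_pos
  set r := φ.rIn with hrdef
  set c := r ^ 2 / (1 + r ^ 2) with hc
  have hcpos : 0 < c := by positivity
  have hI := int_D.comp_sub_right x₀
  refine ⟨(c ^ 4)⁻¹ * ∫ x : E4, ((1 + ‖x - x₀‖ ^ 2) ^ 4)⁻¹,
    mul_nonneg (by positivity) (integral_nonneg fun x => by positivity), fun ε hε => ?_⟩
  obtain ⟨h1, h2⟩ := scale_D x₀ ε hε
  rw [← h2, mul_assoc, mul_comm _ (ε ^ 4), ← mul_assoc, ← integral_const_mul,
    ← integral_sub h1 (hI.const_mul _)]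
  refine integral_mono (h1.sub (hI.const_mul _)) (wf_int4 φ ε hε) fun x => ?_
  show Uf x₀ ε x ^ 4 - (c ^ 4)⁻¹ * ε ^ 4 * ((1 + ‖x - x₀‖ ^ 2) ^ 4)⁻¹ ≤ wf φ ε x ^ 4
  have p : 0 ≤ (c ^ 4)⁻¹ * ε ^ 4 * ((1 + ‖x - x₀‖ ^ 2) ^ 4)⁻¹ := by positivity
  rcases le_or_gt ‖x - x₀‖ r with h | h
  · rw [wf_eq φ ε x h]; linarith
  · have hw : 0 ≤ wf φ ε x ^ 4 := by have := wf_nonneg φ ε hε x; positivity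
    have hs : c * (1 + ‖x - x₀‖ ^ 2) ≤ ε ^ 2 + ‖x - x₀‖ ^ 2 := by
      have : c * (1 + ‖x - x₀‖ ^ 2) ≤ ‖x - x₀‖ ^ 2 := by
        rw [hc, div_mul_eq_mul_div, div_le_iff₀ (by positivity)]
        nlinarith [pow_le_pow_left₀ hr.le h.le 2]
      nlinarith [sq_nonneg ε]
    have : Uf x₀ ε x ^ 4 ≤ (c ^ 4)⁻¹ * ε ^ 4 * ((1 + ‖x - x₀‖ ^ 2) ^ 4)⁻¹ := by
      calc Uf x₀ ε x ^ 4 ≤ (ε / (c * (1 + ‖x - x₀‖ ^ 2))) ^ 4 := by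
            unfold Uf; gcongr
        _ = _ := by field_simp
    linarith

lemma cross_lower (ε δ : ℝ) (hε : 0 < ε) (hεδ : ε ≤ δ) :
    ε * δ / 4 * Lf x₀ φ.rIn δ ≤ ∫ x, wf φ ε x * wf φ δ x := by
  have hδ : 0 < δ := hε.trans_le hεδ
  unfold Lf
  rw [← integral_indicator (ann_meas _ _ _), ← integral_const_mul]
  refine integral_mono (((integrable_indicator_iff (ann_meas _ _ _)).2
    (ann_integrable _ _ _ hδ)).const_mul _) ?_ fun x => ?_
  · refine ((wf_contDiff φ ε hε).continuous.mul
      (wf_contDiff φ δ hδ).continuous).integrable_of_hasCompactSupport ?_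
    exact (wf_compact φ ε).mul_right
  · show ε * δ / 4 * (ann x₀ φ.rIn δ).indicator (fun x : E4 => (‖x - x₀‖ ^ 4)⁻¹) x
      ≤ wf φ ε x * wf φ δ x
    by_cases h : x ∈ ann x₀ φ.rIn δ
    · rw [Set.indicator_of_mem h, wf_eq φ ε x h.2, wf_eq φ δ x h.2]
      have hs := h.1
      unfold Uf
      set s := ‖x - x₀‖
      have hs0 : 0 < s := hδ.trans hs
      have e1 : ε ^ 2 + s ^ 2 ≤ 2 * s ^ 2 := by
        nlinarith [pow_le_pow_left₀ hε.le (hεδ.trans hs.le) 2]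
      have e2 : δ ^ 2 + s ^ 2 ≤ 2 * s ^ 2 := by
        nlinarith [pow_le_pow_left₀ hδ.le hs.le 2]
      calc ε * δ / 4 * (s ^ 4)⁻¹ = ε / (2 * s ^ 2) * (δ / (2 * s ^ 2)) := by
            field_simp; norm_num
        _ ≤ _ := by gcongr
    · rw [Set.indicator_of_notMem h, mul_zero]
      exact mul_nonneg (wf_nonneg φ ε hε x) (wf_nonneg φ δ hδ x)

end W

lemma arith {d n m P Q X G θ C1 C2 A lam δ L : ℝ} (hd : 0 < d) (hn : 0 < n) (hm : 0 < m)
    (hnd : n ^ 2 ≤ d) (hmd : m ^ 2 ≤ d)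
    (hn2 : d * (n ^ 2)⁻¹ ≤ 1 + θ * δ ^ 2) (hm2 : d * (m ^ 2)⁻¹ ≤ 1 + θ * δ ^ 2)
    (hθδ : θ * δ ^ 2 ≤ 1) (hθ : 0 ≤ θ) (hG : 0 ≤ G) (hC1 : 0 ≤ C1) (hC2 : 0 ≤ C2)
    (hA : 0 < A) (hL0 : 0 ≤ L) (hδ : 0 < δ) (hlam : A < lam)
    (hP : P ≤ G + 4 * (2 * A) * (δ / 64) ^ 2 * L + C1 * (δ / 64) ^ 2)
    (hQ : Q ≤ G + 4 * (lam / 4096) * δ ^ 2 * L + C2 * δ ^ 2)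
    (hX : (δ / 64) * δ / 4 * L ≤ X)
    (hL : G * θ + C1 + C2 < lam / 1024 * L) :
    1 / 2 * ((n ^ 2)⁻¹ * P) + 1 / 2 * ((m ^ 2)⁻¹ * Q) - lam * (n⁻¹ * m⁻¹ * X) < G / d := by
  have hl : 0 < lam := hA.trans hlam
  set P' := G + 4 * (2 * A) * (δ / 64) ^ 2 * L + C1 * (δ / 64) ^ 2 with hP'
  set Q' := G + 4 * (lam / 4096) * δ ^ 2 * L + C2 * δ ^ 2 with hQ'
  have hP0 : 0 ≤ P' := by positivity
  have hQ0 : 0 ≤ Q' := by positivity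
  have hX0 : 0 ≤ X := le_trans (by positivity) hX
  have e1 : d * ((n ^ 2)⁻¹ * P) ≤ (1 + θ * δ ^ 2) * P' := by
    calc d * ((n ^ 2)⁻¹ * P) ≤ d * ((n ^ 2)⁻¹ * P') := by gcongr
      _ = d * (n ^ 2)⁻¹ * P' := by ring
      _ ≤ _ := by gcongr
  have e2 : d * ((m ^ 2)⁻¹ * Q) ≤ (1 + θ * δ ^ 2) * Q' := by
    calc d * ((m ^ 2)⁻¹ * Q) ≤ d * ((m ^ 2)⁻¹ * Q') := by gcongr
      _ = d * (m ^ 2)⁻¹ * Q' := by ring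
      _ ≤ _ := by gcongr
  have hnm : n * m ≤ d := by nlinarith [sq_nonneg (n - m)]
  have e3 : X ≤ d * (n⁻¹ * m⁻¹ * X) := by
    have : 1 ≤ d * (n⁻¹ * m⁻¹) := by
      rw [← mul_inv, ← div_eq_mul_inv, le_div_iff₀ (by positivity)]
      linarith
    nlinarith
  have e4 : lam * ((δ / 64) * δ / 4 * L) ≤ lam * (d * (n⁻¹ * m⁻¹ * X)) :=
    mul_le_mul_of_nonneg_left (hX.trans e3) hl.le
  rw [lt_div_iff₀ hd]
  set R := (4 * (2 * A) * (δ / 64) ^ 2 * L + C1 * (δ / 64) ^ 2) +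
    (4 * (lam / 4096) * δ ^ 2 * L + C2 * δ ^ 2) with hR
  have hR0 : 0 ≤ R := by positivity
  have e5 : (1 + θ * δ ^ 2) * P' + (1 + θ * δ ^ 2) * Q' ≤ 2 * G + 2 * (G * θ * δ ^ 2) + 2 * R := by
    have : P' + Q' = 2 * G + R := by rw [hP', hQ', hR]; ring
    have h2 : θ * δ ^ 2 * R ≤ 1 * R := mul_le_mul_of_nonneg_right hθδ hR0
    have h3 : (1 + θ * δ ^ 2) * P' + (1 + θ * δ ^ 2) * Q'
        = 2 * G + 2 * (G * θ * δ ^ 2) + R + θ * δ ^ 2 * R := by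
      rw [← mul_add, this]; ring
    rw [h3]
    linarith
  have e6 : R ≤ (A / 512 * L + lam / 1024 * L + C1 + C2) * δ ^ 2 := by
    rw [hR]
    have : 0 ≤ C1 * δ ^ 2 := by positivity
    linarith
  have e7 : A / 512 * L ≤ lam / 512 * L := by gcongr
  have e8 : 0 < δ ^ 2 := by positivity
  have e9 : (G * θ + C1 + C2) * δ ^ 2 < lam / 1024 * L * δ ^ 2 := by gcongr
  have e10 : A / 512 * L * δ ^ 2 ≤ lam / 512 * L * δ ^ 2 := by gcongr
  have e11 : (1 / 2 * ((n ^ 2)⁻¹ * P) + 1 / 2 * ((m ^ 2)⁻¹ * Q) - lam * (n⁻¹ * m⁻¹ * X)) * d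
      = 1 / 2 * (d * ((n ^ 2)⁻¹ * P)) + 1 / 2 * (d * ((m ^ 2)⁻¹ * Q))
        - lam * (d * (n⁻¹ * m⁻¹ * X)) := by ring
  rw [e11]
  clear_value P' Q' R
  generalize d * ((n ^ 2)⁻¹ * P) = Z1 at *
  generalize d * ((m ^ 2)⁻¹ * Q) = Z2 at *
  generalize lam * (d * (n⁻¹ * m⁻¹ * X)) = Z3 at *
  have e12 : Z1 + Z2 ≤ 2 * G + 2 * (G * θ * δ ^ 2) + 2 * R := (add_le_add e1 e2).trans e5
  clear e1 e2 e3 e5 hP' hQ' hR e11 hn2 hm2 hP hQ hX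
  linarith

lemma norm_arith {d c n ε : ℝ} (hd : 0 < d) (hc : 0 ≤ c) (hn : 0 < n)
    (h : d ^ 2 - c ^ 2 * ε ^ 4 ≤ n ^ 4) (hs : 2 * c / d * ε ^ 2 ≤ 1) :
    d * (n ^ 2)⁻¹ ≤ 1 + 2 * c / d * ε ^ 2 := by
  have hy0 : 0 ≤ c * ε ^ 2 := by positivity
  have hs' : 2 * (c * ε ^ 2) ≤ d := by
    have : 2 * c / d * ε ^ 2 = 2 * (c * ε ^ 2) / d := by ring
    rw [this, div_le_one hd] at hs
    exact hs
  have e : 2 * c / d * ε ^ 2 = 2 * (c * ε ^ 2) / d := by ring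
  rw [e]
  have h' : d ^ 2 - (c * ε ^ 2) ^ 2 ≤ (n ^ 2) ^ 2 := by nlinarith
  generalize c * ε ^ 2 = y at *
  have h1 : d - y ≤ n ^ 2 := by
    exact le_of_abs_le (abs_le_of_sq_le_sq (by nlinarith) (by positivity))
  rw [← div_eq_mul_inv, div_le_iff₀ (by positivity)]
  have h2 : d * d ≤ (d + 2 * y) * n ^ 2 := by nlinarith
  have h3 : (1 + 2 * y / d) * n ^ 2 = (d + 2 * y) * n ^ 2 / d := by field_simp
  rw [h3, le_div_iff₀ hd]
  exact h2

lemma Lf_nonneg (x₀ : E4) (r δ : ℝ) : 0 ≤ Lf x₀ r δ :=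
  integral_nonneg fun x => by positivity

lemma core (x₀ : E4) (φ : ContDiffBump x₀) (a b : E4 → ℝ) (γ A lam amax bmax D K : ℝ)
    (hγ : 0 ≤ γ) (hA : 0 < A) (hlam : A < lam)
    (hD : D = ∫ y : E4, ((1 + ‖y‖ ^ 2) ^ 4)⁻¹)
    (hK : K = ∫ y : E4, ‖y‖ ^ 2 * ((1 + ‖y‖ ^ 2) ^ 4)⁻¹)
    (ha0 : ∀ x, ‖x - x₀‖ ≤ φ.rOut → 0 ≤ a x)
    (ha1 : ∀ x, ‖x - x₀‖ < φ.rIn → a x ≤ γ + 2 * A * ‖x - x₀‖ ^ 2)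
    (ha2 : ∀ x, ‖x - x₀‖ ≤ φ.rOut → a x ≤ amax)
    (hb0 : ∀ x, ‖x - x₀‖ ≤ φ.rOut → 0 ≤ b x)
    (hb1 : ∀ x, ‖x - x₀‖ < φ.rIn → b x ≤ γ + lam / 4096 * ‖x - x₀‖ ^ 2)
    (hb2 : ∀ x, ‖x - x₀‖ ≤ φ.rOut → b x ≤ bmax) :
    ∃ ε δ n m : ℝ, 0 < ε ∧ 0 < δ ∧ 0 < n ∧ 0 < m ∧
      n ^ 4 = ∫ x, wf φ ε x ^ 4 ∧ m ^ 4 = ∫ x, wf φ δ x ^ 4 ∧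
      1 / 2 * ((n ^ 2)⁻¹ * ∫ x, a x * ‖fderiv ℝ (wf φ ε) x‖ ^ 2)
      + 1 / 2 * ((m ^ 2)⁻¹ * ∫ x, b x * ‖fderiv ℝ (wf φ δ) x‖ ^ 2)
      - lam * (n⁻¹ * m⁻¹ * ∫ x, wf φ ε x * wf φ δ x) < γ * (4 * K) / √D := by
  have hl : 0 < lam := hA.trans hlam
  have hDpos : 0 < D := hD ▸ D_pos
  have hK0 : 0 ≤ K := hK ▸ integral_nonneg fun y => by positivity
  have hx₀ : ‖x₀ - x₀‖ ≤ φ.rOut := by simpa using φ.rOut_pos.le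
  obtain ⟨C1, hC1, hC1'⟩ := grad_bound_s6 φ a γ (2 * A) amax 64 hγ (by positivity)
    ((ha0 x₀ hx₀).trans (ha2 x₀ hx₀)) (by norm_num) ha0 ha1 ha2
  obtain ⟨C2, hC2, hC2'⟩ := grad_bound_s6 φ b γ (lam / 4096) bmax 1 hγ (by positivity)
    ((hb0 x₀ hx₀).trans (hb2 x₀ hx₀)) (by norm_num) hb0 hb1 hb2
  obtain ⟨C3, hC3, hC3'⟩ := norm_lower φ
  simp_rw [← hK] at hC1' hC2'
  simp_rw [← hD] at hC3'
  set d := √D with hd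
  have hdpos : 0 < d := Real.sqrt_pos.2 hDpos
  have hd2 : d ^ 2 = D := Real.sq_sqrt hDpos.le
  set c := C3 + 1 with hc
  have hc0 : 0 ≤ c := by positivity
  have hcc : C3 ≤ c ^ 2 := by rw [hc]; nlinarith
  set θ := 2 * c / d with hθ
  have hθ0 : 0 < θ := by positivity
  have hG : 0 ≤ γ * (4 * K) := by positivity
  have hsm : ∀ᶠ δ in 𝓝[>] (0:ℝ), θ * δ ^ 2 < 1 := by
    have : Tendsto (fun δ : ℝ => θ * δ ^ 2) (𝓝[>] 0) (𝓝 (θ * 0 ^ 2)) :=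
      ((by fun_prop : Continuous (fun δ : ℝ => θ * δ ^ 2)).tendsto 0).mono_left nhdsWithin_le_nhds
    exact this.eventually_lt_const (by norm_num)
  obtain ⟨δ, hL, hδθ, hδ⟩ := ((Lf_large x₀ φ.rIn φ.rIn_pos
    ((γ * (4 * K) * θ + C1 + C2 + 1) * (1024 / lam))).and (hsm.and self_mem_nhdsWithin)).exists
  replace hδ : 0 < δ := hδ
  have hε : 0 < δ / 64 := by positivity
  have hεδ : δ / 64 ≤ δ := by linarith
  have pos : ∀ ε, 0 < ε → ε ≤ δ → 0 < ∫ x, wf φ ε x ^ 4 ∧ d ^ 2 - c ^ 2 * ε ^ 4 ≤ ∫ x, wf φ ε x ^ 4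
      ∧ θ * ε ^ 2 ≤ θ * δ ^ 2 := by
    intro ε h1 h2
    have h3 : θ * ε ^ 2 ≤ θ * δ ^ 2 := by gcongr
    have h4 : d ^ 2 - c ^ 2 * ε ^ 4 ≤ ∫ x, wf φ ε x ^ 4 := by
      refine le_trans ?_ (hC3' ε h1)
      rw [hd2]
      have : C3 * ε ^ 4 ≤ c ^ 2 * ε ^ 4 := by gcongr
      linarith
    refine ⟨lt_of_lt_of_le ?_ h4, h4, h3⟩
    have h5 : c * ε ^ 2 < d := by
      have h6 : θ * ε ^ 2 < 1 := h3.trans_lt hδθ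
      have h7 : θ * ε ^ 2 = 2 * (c * ε ^ 2) / d := by rw [hθ]; ring
      rw [h7, div_lt_one hdpos] at h6
      have : 0 ≤ c * ε ^ 2 := by positivity
      linarith
    have h8 : (c * ε ^ 2) ^ 2 < d ^ 2 := by gcongr
    nlinarith
  have root : ∀ I : ℝ, 0 < I → ∃ n : ℝ, 0 < n ∧ n ^ 4 = I := by
    intro I hI
    refine ⟨√(√I), by positivity, ?_⟩
    rw [show √(√I) ^ 4 = (√(√I) ^ 2) ^ 2 by ring, Real.sq_sqrt (by positivity), Real.sq_sqrt hI.le]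
  obtain ⟨p1, p2, p3⟩ := pos _ hε hεδ
  obtain ⟨q1, q2, q3⟩ := pos _ hδ le_rfl
  obtain ⟨n, hn, hn4⟩ := root _ p1
  obtain ⟨m, hm, hm4⟩ := root _ q1
  refine ⟨δ / 64, δ, n, m, hε, hδ, hn, hm, hn4, hm4, ?_⟩
  have up : ∀ n : ℝ, n ^ 4 ≤ D → n ^ 2 ≤ d := by
    intro n h
    refine Real.le_sqrt_of_sq_le ?_
    nlinarith
  have hP := hC1' _ hε
  rw [show 64 * (δ / 64) = δ by ring] at hP
  have hQ := hC2' _ hδ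
  rw [one_mul] at hQ
  refine arith hdpos hn hm (up n ?_) (up m ?_)
    ((norm_arith hdpos hc0 hn (hn4 ▸ p2) (p3.trans hδθ.le)).trans ?_)
    (norm_arith hdpos hc0 hm (hm4 ▸ q2) hδθ.le) hδθ.le hθ0.le hG hC1 hC2 hA
    (Lf_nonneg x₀ φ.rIn δ) hδ hlam hP hQ (cross_lower φ _ _ hε hεδ) ?_
  · rw [hn4, hD]; exact norm_upper φ _ hε
  · rw [hm4, hD]; exact norm_upper φ _ hδ
  · linarith
  · have h1 := mul_le_mul_of_nonneg_left hL (by positivity : 0 ≤ lam / 1024)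
    have h2 : lam / 1024 * ((γ * (4 * K) * θ + C1 + C2 + 1) * (1024 / lam))
      = γ * (4 * K) * θ + C1 + C2 + 1 := by field_simp
    linarith

lemma expand_le (x₀ : E4) (f : E4 → ℝ) (k B : ℝ) (hB : 0 < B)
    (h : Tendsto (fun x => (f x - f x₀ - B * ‖x - x₀‖ ^ k) / ‖x - x₀‖ ^ k) (𝓝[≠] x₀) (𝓝 0)) :
    ∀ᶠ x in 𝓝[≠] x₀, f x ≤ f x₀ + 2 * B * ‖x - x₀‖ ^ k := by
  filter_upwards [h.eventually_lt_const hB, self_mem_nhdsWithin] with x h1 h2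
  have h3 : 0 < ‖x - x₀‖ := norm_pos_iff.2 (sub_ne_zero.2 h2)
  rw [div_lt_iff₀ (by positivity)] at h1
  linarith

theorem stmt_6
    (N : ℕ) (hN : N = 4)
    (Ω : Set (EuclideanSpace ℝ (Fin N)))
    (hΩo : IsOpen Ω) (hΩb : Bornology.IsBounded Ω) (hΩne : Ω.Nonempty)
    (x₀ : EuclideanSpace ℝ (Fin N)) (hx₀ : x₀ ∈ Ω)
    (a b : EuclideanSpace ℝ (Fin N) → ℝ)
    (ha : Continuous a) (hb : Continuous b)
    (hapos : ∀ x ∈ closure Ω, 0 < a x) (hbpos : ∀ x ∈ closure Ω, 0 < b x)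
    (γ₀ : ℝ) (haγ : a x₀ = γ₀) (hbγ : b x₀ = γ₀)
    (hamin : ∀ x ∈ closure Ω, γ₀ ≤ a x) (hbmin : ∀ x ∈ closure Ω, γ₀ ≤ b x)
    (k l A B : ℝ) (hA : 0 < A) (hB : 0 < B)
    (hk : k = 2) (hl : 2 < l)
    (hexpa : Tendsto (fun x => (a x - a x₀ - A * ‖x - x₀‖ ^ k) / ‖x - x₀‖ ^ k)
      (𝓝[≠] x₀) (𝓝 0))
    (hexpb : Tendsto (fun x => (b x - b x₀ - B * ‖x - x₀‖ ^ l) / ‖x - x₀‖ ^ l)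
      (𝓝[≠] x₀) (𝓝 0))
    (q : ℝ) (hq : q = 2 * (N : ℝ) / ((N : ℝ) - 2))
    (K₁ K₂ S : ℝ)
    (hK₁ : K₁ = ((N : ℝ) - 2) ^ 2 *
      ∫ y : EuclideanSpace ℝ (Fin N), ‖y‖ ^ 2 * (1 + ‖y‖ ^ 2) ^ (-(N : ℝ)))
    (hK₂ : K₂ = (∫ y : EuclideanSpace ℝ (Fin N), (1 + ‖y‖ ^ 2) ^ (-(N : ℝ)))
      ^ (((N : ℝ) - 2) / (N : ℝ)))
    (hS : S = K₁ / K₂)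
    (lam : ℝ) (hlam : A < lam) :
    ∃ u v : EuclideanSpace ℝ (Fin N) → ℝ,
      ContDiff ℝ (⊤ : ℕ∞) u ∧ HasCompactSupport u ∧ tsupport u ⊆ Ω ∧
      ContDiff ℝ (⊤ : ℕ∞) v ∧ HasCompactSupport v ∧ tsupport v ⊆ Ω ∧
      (∫ x in Ω, |u x| ^ q) ^ (1 / q) = 1 ∧
      (∫ x in Ω, |v x| ^ q) ^ (1 / q) = 1 ∧
      (1 / 2) * (∫ x in Ω, a x * ‖fderiv ℝ u x‖ ^ 2)
        + (1 / 2) * (∫ x in Ω, b x * ‖fderiv ℝ v x‖ ^ 2)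
        - lam * ∫ x in Ω, u x * v x
      < γ₀ * S := by
  subst hN
  have hqv : q = ((4:ℕ):ℝ) := by rw [hq]; norm_num
  have hγ : 0 < γ₀ := haγ ▸ hapos x₀ (subset_closure hx₀)
  have hl0 : 0 < lam := hA.trans hlam
  have hea : ∀ᶠ x in 𝓝 x₀, a x ≤ γ₀ + 2 * A * ‖x - x₀‖ ^ 2 := by
    have h1 := expand_le x₀ a k A hA hexpa
    rw [eventually_nhdsWithin_iff] at h1
    filter_upwards [h1] with x hx
    by_cases hxx : x = x₀
    · rw [hxx, haγ]; simp
    · have := hx hxx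
      rw [hk, Real.rpow_two, haγ] at this
      exact this
  have heb : ∀ᶠ x in 𝓝 x₀, b x ≤ γ₀ + lam / 4096 * ‖x - x₀‖ ^ 2 := by
    have h1 := expand_le x₀ b l B hB hexpb
    rw [eventually_nhdsWithin_iff] at h1
    have h2 : ∀ᶠ x in 𝓝 x₀, 2 * B * ‖x - x₀‖ ^ (l - 2) < lam / 4096 := by
      have hc : Continuous (fun x : EuclideanSpace ℝ (Fin 4) => 2 * B * ‖x - x₀‖ ^ (l - 2)) := by
        refine continuous_const.mul (Continuous.rpow_const (by fun_prop) fun x => Or.inr (by linarith))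
      have := hc.tendsto x₀
      simp only [sub_self, norm_zero, Real.zero_rpow (by linarith : l - 2 ≠ 0), mul_zero] at this
      exact this.eventually_lt_const (by positivity)
    filter_upwards [h1, h2] with x hx hx2
    by_cases hxx : x = x₀
    · rw [hxx, hbγ]; simp
    · have h3 := hx hxx
      have h4 : 0 < ‖x - x₀‖ := norm_pos_iff.2 (sub_ne_zero.2 hxx)
      have h5 : ‖x - x₀‖ ^ l = ‖x - x₀‖ ^ (l - 2) * ‖x - x₀‖ ^ 2 := by
        rw [← Real.rpow_two, ← Real.rpow_add h4]; ring_nf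
      rw [h5, hbγ, ← mul_assoc] at h3
      refine h3.trans ?_
      gcongr
  obtain ⟨ρ, hρ, hball⟩ := Metric.eventually_nhds_iff_ball.1
    ((hea.and heb).and (hΩo.mem_nhds hx₀))
  let φ : ContDiffBump x₀ := ⟨ρ / 4, ρ / 2, by positivity, by linarith⟩
  have hin : φ.rIn = ρ / 4 := rfl
  have hout : φ.rOut = ρ / 2 := rfl
  have hsub : Metric.closedBall x₀ φ.rOut ⊆ Ω := fun x hx =>
    (hball x (Metric.closedBall_subset_ball (by rw [hout]; linarith) hx)).2
  have hmem : ∀ x, ‖x - x₀‖ ≤ φ.rOut → x ∈ Ω := fun x hx =>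
    hsub (by rw [mem_closedBall_iff_norm]; exact hx)
  have hmem2 : ∀ x, ‖x - x₀‖ < φ.rIn → x ∈ Metric.ball x₀ ρ := fun x hx => by
    rw [mem_ball_iff_norm]; rw [hin] at hx; linarith
  obtain ⟨amax, hamax⟩ := (isCompact_closedBall x₀ φ.rOut).bddAbove_image ha.continuousOn
  obtain ⟨bmax, hbmax⟩ := (isCompact_closedBall x₀ φ.rOut).bddAbove_image hb.continuousOn
  obtain ⟨ε, δ, n, m, hε, hδ, hn, hm, hn4, hm4, hlt⟩ := core x₀ φ a b γ₀ A lam amax bmax _ _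
    hγ.le hA hlam rfl rfl
    (fun x hx => (hapos x (subset_closure (hmem x hx))).le)
    (fun x hx => (hball x (hmem2 x hx)).1.1)
    (fun x hx => hamax ⟨x, by rw [mem_closedBall_iff_norm]; exact hx, rfl⟩)
    (fun x hx => (hbpos x (subset_closure (hmem x hx))).le)
    (fun x hx => (hball x (hmem2 x hx)).1.2)
    (fun x hx => hbmax ⟨x, by rw [mem_closedBall_iff_norm]; exact hx, rfl⟩)
  have hw0 : ∀ ε, ∀ x ∉ Ω, wf φ ε x = 0 := fun ε x hx => by
    by_contra h
    exact hx (hsub (wf_tsupport φ ε (subset_tsupport _ h)))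
  have hdw0 : ∀ ε, ∀ x ∉ Ω, fderiv ℝ (wf φ ε) x = 0 := fun ε x hx => by
    by_contra h
    exact hx (hsub (wf_tsupport φ ε (support_fderiv_subset ℝ h)))
  have hts : ∀ n ε : ℝ, tsupport (fun x => n⁻¹ * wf φ ε x) ⊆ Ω := fun n ε =>
    (tsupport_mul_subset_right.trans (wf_tsupport φ ε)).trans hsub
  have hnorm : ∀ n ε : ℝ, 0 < n → n ^ 4 = ∫ x, wf φ ε x ^ 4 →
      (∫ x in Ω, |n⁻¹ * wf φ ε x| ^ q) ^ (1 / q) = 1 := by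
    intro n ε hn hn4
    have h1 : ∀ x, |n⁻¹ * wf φ ε x| ^ q = (n ^ 4)⁻¹ * wf φ ε x ^ 4 := by
      intro x
      rw [hqv, Real.rpow_natCast, Even.pow_abs (by decide), mul_pow, inv_pow]
    simp_rw [h1]
    rw [integral_const_mul, setIntegral_eq_integral_of_forall_compl_eq_zero
      (fun x hx => by rw [hw0 ε x hx]; norm_num), ← hn4, inv_mul_cancel₀ (by positivity),
      Real.one_rpow]
  have hgrad : ∀ (f : EuclideanSpace ℝ (Fin 4) → ℝ) (n ε : ℝ), 0 < ε →
      ∫ x in Ω, f x * ‖fderiv ℝ (fun x => n⁻¹ * wf φ ε x) x‖ ^ 2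
        = (n ^ 2)⁻¹ * ∫ x, f x * ‖fderiv ℝ (wf φ ε) x‖ ^ 2 := by
    intro f n ε hε
    have h1 : ∀ x, f x * ‖fderiv ℝ (fun x => n⁻¹ * wf φ ε x) x‖ ^ 2
        = (n ^ 2)⁻¹ * (f x * ‖fderiv ℝ (wf φ ε) x‖ ^ 2) := by
      intro x
      rw [fderiv_const_mul ((wf_contDiff φ ε hε).differentiable (by simp) x), norm_smul, mul_pow,
        Real.norm_eq_abs, sq_abs, inv_pow]
      ring
    simp_rw [h1]
    rw [integral_const_mul, setIntegral_eq_integral_of_forall_compl_eq_zero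
      (fun x hx => by rw [hdw0 ε x hx]; simp)]
  have hcross : ∫ x in Ω, (n⁻¹ * wf φ ε x) * (m⁻¹ * wf φ δ x)
      = n⁻¹ * m⁻¹ * ∫ x, wf φ ε x * wf φ δ x := by
    rw [← integral_const_mul, setIntegral_eq_integral_of_forall_compl_eq_zero
      (fun x hx => by rw [hw0 ε x hx]; simp)]
    congr 1
    ext x
    ring
  refine ⟨fun x => n⁻¹ * wf φ ε x, fun x => m⁻¹ * wf φ δ x,
    contDiff_const.mul (wf_contDiff φ ε hε), (wf_compact φ ε).mul_left, hts n ε,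
    contDiff_const.mul (wf_contDiff φ δ hδ), (wf_compact φ δ).mul_left, hts m δ,
    hnorm n ε hn hn4, hnorm m δ hm hm4, ?_⟩
  rw [hgrad a n ε hε, hgrad b m δ hδ, hcross]
  have hpow : ∀ y : EuclideanSpace ℝ (Fin 4),
      (1 + ‖y‖ ^ 2) ^ (-((4:ℕ) : ℝ)) = ((1 + ‖y‖ ^ 2) ^ 4)⁻¹ := fun y => by
    rw [Real.rpow_neg (by positivity), Real.rpow_natCast]
  simp_rw [hpow] at hK₁ hK₂
  have hK1' : K₁ = 4 * ∫ y : EuclideanSpace ℝ (Fin 4), ‖y‖ ^ 2 * ((1 + ‖y‖ ^ 2) ^ 4)⁻¹ := by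
    rw [hK₁]; norm_num
  have hK2' : K₂ = √(∫ y : EuclideanSpace ℝ (Fin 4), ((1 + ‖y‖ ^ 2) ^ 4)⁻¹) := by
    rw [hK₂, Real.sqrt_eq_rpow]; norm_num
  rw [hS, hK1', hK2', ← mul_div_assoc]
  exact hlt
end
end
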